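/- arXiv:2408.12195 — 2 statements merged into one kernel-verified Lean document; each statement's English description precedes it below -/
import Mathlib

section
/- Let g = e^{2u}g_euc ∈ 𝓜(D∖{0}) with |𝕂_g|(D∖{0}) < π, ∫_D e^{2u} dA < ∞, and assume in addition that the curvature measure 𝕂_g is nonnegative on D∖{0}. Then λ = lim_{a.e. r→0} (1/2π) ∫_{∂D_r} ∂u/∂r satisfies λ > -1 (strictly). -/
open MeasureTheory Filter Topology Metric Set Real

noncomputable section

/-- The flat Laplacian of a function on the plane `ℂ ≃ ℝ²`. -/
noncomputable def lap (u : ℂ → ℝ) (z : ℂ) : ℝ :=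
  fderiv ℝ (fun w => fderiv ℝ u w 1) z 1 +
    fderiv ℝ (fun w => fderiv ℝ u w Complex.I) z Complex.I

/-- Integral of a function against a signed (Radon) measure. -/
noncomputable def sInt (μ : SignedMeasure ℂ) (f : ℂ → ℝ) : ℝ :=
  ∫ x, f x ∂μ.toJordanDecomposition.posPart -
    ∫ x, f x ∂μ.toJordanDecomposition.negPart

/-- A smooth test function compactly supported in `Ω`. -/
def IsTestOn (φ : ℂ → ℝ) (Ω : Set ℂ) : Prop :=
  ContDiff ℝ (⊤ : ℕ∞) φ ∧ HasCompactSupport φ ∧ tsupport φ ⊆ Ω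

/-- `g = e^{2u} g_euc ∈ 𝓜(Ω)` with Gauss curvature measure `μ`:
`u ∈ L¹_loc(Ω)`, `μ` is concentrated on `Ω`, and `-Δu = μ` distributionally on `Ω`. -/
def HasCurv (u : ℂ → ℝ) (Ω : Set ℂ) (μ : SignedMeasure ℂ) : Prop :=
  LocallyIntegrableOn u Ω volume ∧ μ.totalVariation Ωᶜ = 0 ∧
    ∀ φ : ℂ → ℝ, IsTestOn φ Ω → (-∫ x in Ω, u x * lap φ x) = sInt μ φ

/-- The radial flux `∫_{∂D_r} ∂u/∂r` through the circle of radius `r` about `0`. -/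
noncomputable def flux (u : ℂ → ℝ) (r : ℝ) : ℝ :=
  ∫ θ in (0 : ℝ)..(2 * π),
    (fderiv ℝ u ((r : ℂ) * Complex.exp (θ * Complex.I)) (Complex.exp (θ * Complex.I))) * r

/-- The logarithmic potential `I_μ(x) = -(1/2π) ∫ log|x-y| dμ(y)` of a signed measure. -/
noncomputable def Ipot (μ : SignedMeasure ℂ) (x : ℂ) : ℝ :=
  -(1 / (2 * π)) * sInt μ (fun y => Real.log ‖x - y‖)
lemma hasFDerivAt_radial (h : ℝ → ℝ) (hh : ContDiff ℝ (⊤ : ℕ∞) h) (p x e : ℂ) :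
    fderiv ℝ (fun w => h (‖w - p‖ ^ 2)) x e =
      deriv h (‖x - p‖ ^ 2) * (2 * ((x - p).re * e.re + (x - p).im * e.im)) := by
  have h1 : HasFDerivAt (fun w : ℂ => ‖w - p‖ ^ 2) (2 • (innerSL ℝ (x - p))) x := by
    have := ((hasFDerivAt_id (𝕜 := ℝ) x).sub_const p).norm_sq
    simpa using this
  have h2 : HasDerivAt h (deriv h (‖x - p‖ ^ 2)) (‖x - p‖ ^ 2) :=
    (hh.differentiable (by simp)).differentiableAt.hasDerivAt
  have h3 := h2.comp_hasFDerivAt x h1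
  have h4 : fderiv ℝ (fun w => h (‖w - p‖ ^ 2)) x = _ := h3.fderiv
  rw [h4]
  simp only [ContinuousLinearMap.smul_apply, innerSL_apply_apply, Complex.inner, smul_eq_mul, nsmul_eq_mul]
  simp
  left; ring

lemma lap_radial (h : ℝ → ℝ) (hh : ContDiff ℝ (⊤ : ℕ∞) h) (p x : ℂ) :
    lap (fun w => h (‖w - p‖ ^ 2)) x =
      4 * (deriv h (‖x - p‖ ^ 2) + ‖x - p‖ ^ 2 * deriv (deriv h) (‖x - p‖ ^ 2)) := by
  have hh' : ContDiff ℝ (⊤ : ℕ∞) (deriv h) := by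
    exact (contDiff_infty_iff_deriv.1 hh).2
  have hd : DifferentiableAt ℝ (fun w : ℂ => deriv h (‖w - p‖ ^ 2)) x := by
    have h1 : DifferentiableAt ℝ (fun w : ℂ => ‖w - p‖ ^ 2) x :=
      (differentiableAt_id.sub_const p).norm_sq ℝ
    exact ((hh'.differentiable (by simp)).differentiableAt).comp x h1
  have hre : HasFDerivAt (fun w : ℂ => 2 * (w - p).re) (2 • Complex.reCLM) x := by
    have : HasFDerivAt (fun w : ℂ => 2 * (w - p).re) _ x :=
      (Complex.reCLM.hasFDerivAt.comp x ((hasFDerivAt_id (𝕜 := ℝ) x).sub_const p)).const_mul (2 : ℝ)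
    refine this.congr_fderiv ?_
    ext z; simp
  have him : HasFDerivAt (fun w : ℂ => 2 * (w - p).im) (2 • Complex.imCLM) x := by
    have : HasFDerivAt (fun w : ℂ => 2 * (w - p).im) _ x :=
      (Complex.imCLM.hasFDerivAt.comp x ((hasFDerivAt_id (𝕜 := ℝ) x).sub_const p)).const_mul (2 : ℝ)
    refine this.congr_fderiv ?_
    ext z; simp
  unfold lap
  simp_rw [hasFDerivAt_radial h hh]
  have e1 : (fun w : ℂ => deriv h (‖w - p‖ ^ 2) * (2 * ((w - p).re * (1:ℂ).re + (w - p).im * (1:ℂ).im)))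
    = fun w => deriv h (‖w - p‖ ^ 2) * (2 * (w - p).re) := by ext; simp
  have e2 : (fun w : ℂ => deriv h (‖w - p‖ ^ 2) * (2 * ((w - p).re * (Complex.I).re + (w - p).im * (Complex.I).im)))
    = fun w => deriv h (‖w - p‖ ^ 2) * (2 * (w - p).im) := by ext; simp
  have f1 : fderiv ℝ (fun w : ℂ => deriv h (‖w - p‖ ^ 2) * (2 * (w - p).re)) x = _ :=
    (hd.hasFDerivAt.mul hre).fderiv
  have f2 : fderiv ℝ (fun w : ℂ => deriv h (‖w - p‖ ^ 2) * (2 * (w - p).im)) x = _ :=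
    (hd.hasFDerivAt.mul him).fderiv
  rw [e1, e2, f1, f2]
  simp only [ContinuousLinearMap.add_apply, ContinuousLinearMap.smul_apply]
  rw [hasFDerivAt_radial _ hh', hasFDerivAt_radial _ hh']
  have : ‖x - p‖ ^ 2 = (x-p).re ^ 2 + (x-p).im ^ 2 := by
    rw [← Complex.normSq_eq_norm_sq, Complex.normSq_apply]; ring
  simp
  rw [this]; simp; ring

lemma log_radial_oneD (h : ℝ → ℝ) (hh : ContDiff ℝ (⊤ : ℕ∞) h) (b R : ℝ) (hb : 0 < b) (hR : 0 ≤ R)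
    (hz : ∀ q, b ^ 2 ≤ q → h q = 0) :
    ∫ s in (0:ℝ)..b, Real.log (max s R) * (s * (4 * (deriv h (s^2) + s^2 * deriv (deriv h) (s^2))))
      = h (R ^ 2) := by
  have hh' : ContDiff ℝ (⊤ : ℕ∞) (deriv h) := (contDiff_infty_iff_deriv.1 hh).2
  have hh'' : ContDiff ℝ (⊤ : ℕ∞) (deriv (deriv h)) := (contDiff_infty_iff_deriv.1 hh').2
  have dh : ∀ q, HasDerivAt h (deriv h q) q := fun q =>
    (hh.differentiable (by simp)).differentiableAt.hasDerivAt
  have dh' : ∀ q, HasDerivAt (deriv h) (deriv (deriv h) q) q := fun q =>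
    (hh'.differentiable (by simp)).differentiableAt.hasDerivAt
  have hz' : deriv h (b^2) = 0 := by
    have h1 : HasDerivWithinAt h (deriv h (b^2)) (Ici (b^2)) (b^2) := (dh _).hasDerivWithinAt
    have h2 : HasDerivWithinAt h 0 (Ici (b^2)) (b^2) := by
      refine (hasDerivWithinAt_const (b^2) (Ici (b^2)) (0:ℝ)).congr (fun q hq => hz q hq) (hz _ le_rfl)
    exact (uniqueDiffOn_Ici (b^2) (b^2) self_mem_Ici).eq_deriv _ h1 h2
  set T : ℝ → ℝ := fun s => Real.log (max s R) * (2 * s^2 * deriv h (s^2)) - h ((max s R)^2) with hT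
  have hcT : ContinuousOn T (Icc 0 b) := by
    rcases hR.eq_or_lt with rfl | hR
    · have : ContinuousOn (fun s : ℝ => (s * Real.log s) * (2 * s * deriv h (s^2)) - h (s^2)) (Icc 0 b) := by
        have := Real.continuous_mul_log
        have := hh'.continuous
        have := hh.continuous
        fun_prop
      refine this.congr fun s hs => ?_
      simp only [hT, max_eq_left hs.1]; ring
    · have := hh'.continuous
      have := hh.continuous
      have h3 : Continuous (fun s : ℝ => Real.log (max s R)) :=
        Continuous.log (by fun_prop) (fun s => by positivity)
      apply Continuous.continuousOn
      simp only [hT]; fun_prop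
  have dP : ∀ s, HasDerivAt (fun s => 2 * s^2 * deriv h (s^2))
      (s * (4 * (deriv h (s^2) + s^2 * deriv (deriv h) (s^2)))) s := by
    intro s
    have h1 : HasDerivAt (fun s : ℝ => s^2) (2 * s) s := by simpa using hasDerivAt_pow 2 s
    have h2 := (h1.const_mul 2).mul ((dh' (s^2)).comp s h1)
    refine HasDerivAt.congr_deriv (f := fun s => 2 * s^2 * deriv h (s^2)) h2 ?_
    simp only [Function.comp]; ring
  have key := MeasureTheory.integral_eq_of_hasDerivAt_off_countable_of_le T
    (fun s => Real.log (max s R) * (s * (4 * (deriv h (s^2) + s^2 * deriv (deriv h) (s^2)))))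
    hb.le (countable_singleton R) hcT ?_ ?_
  · rw [key]
    simp only [hT]
    rw [max_eq_right hR, hz']
    rw [hz ((max b R)^2) (by gcongr; exact le_max_left _ _)]
    simp
  · rintro s ⟨hs, hsR⟩
    have hs0 : 0 < s := hs.1
    rcases lt_or_gt_of_ne (show s ≠ R from hsR) with hlt | hgt
    · have e : T =ᶠ[𝓝 s] fun s => Real.log R * (2 * s^2 * deriv h (s^2)) - h (R^2) := by
        filter_upwards [eventually_lt_nhds hlt] with t ht
        simp [hT, max_eq_right ht.le]
      rw [max_eq_right hlt.le]
      exact (((dP s).const_mul _).sub_const _).congr_of_eventuallyEq e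
    · have e : T =ᶠ[𝓝 s] fun s => Real.log s * (2 * s^2 * deriv h (s^2)) - h (s^2) := by
        filter_upwards [eventually_gt_nhds hgt] with t ht
        simp [hT, max_eq_left ht.le]
      rw [max_eq_left hgt.le]
      have h1 : HasDerivAt (fun s : ℝ => s^2) (2 * s) s := by simpa using hasDerivAt_pow 2 s
      have := ((Real.hasDerivAt_log hs0.ne').mul (dP s)).sub ((dh (s^2)).comp s h1)
      refine HasDerivAt.congr_of_eventuallyEq ?_ e
      refine HasDerivAt.congr_deriv (f := fun s => Real.log s * (2 * s^2 * deriv h (s^2)) - h (s^2)) this ?_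
      field_simp
      ring
  · have hc : Continuous (fun s => (s * (4 * (deriv h (s^2) + s^2 * deriv (deriv h) (s^2))))) := by
      have := hh'.continuous
      have := hh''.continuous
      fun_prop
    refine IntervalIntegrable.mul_continuousOn ?_ hc.continuousOn
    rcases hR.eq_or_lt with rfl | hR
    · have : IntervalIntegrable Real.log volume 0 b := intervalIntegral.intervalIntegrable_log'
      refine this.congr ?_
      intro s hs
      rw [uIoc_of_le hb.le] at hs
      simp [max_eq_left hs.1.le]
    · have h3 : Continuous (fun s : ℝ => Real.log (max s R)) :=
        Continuous.log (by fun_prop) (fun s => by positivity)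
      exact h3.intervalIntegrable _ _

lemma polar_symm_eq (p : ℝ × ℝ) :
    Complex.polarCoord.symm p = (p.1 : ℂ) * Complex.exp (p.2 * Complex.I) := by
  rw [Complex.polarCoord_symm_apply, Complex.exp_mul_I, Complex.ofReal_cos, Complex.ofReal_sin]

lemma norm_polar (s θ : ℝ) : ‖(s : ℂ) * Complex.exp (θ * Complex.I)‖ = |s| := by
  simp [Complex.norm_exp_ofReal_mul_I]

lemma continuous_polar : Continuous (fun p : ℝ × ℝ => (p.1 : ℂ) * Complex.exp (p.2 * Complex.I)) := by
  fun_prop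

lemma polar_lintegral (f : ℂ → ENNReal) (hf : Measurable f) :
    ∫⁻ z, f z = ∫⁻ s in Ioi (0:ℝ), ENNReal.ofReal s *
      ∫⁻ θ in Ioo (-π) π, f ((s : ℂ) * Complex.exp (θ * Complex.I)) := by
  rw [← Complex.lintegral_comp_polarCoord_symm]
  simp_rw [polar_symm_eq, smul_eq_mul]
  have hm : Measurable (fun p : ℝ × ℝ => ENNReal.ofReal p.1 * f ((p.1 : ℂ) * Complex.exp (p.2 * Complex.I))) :=
    (measurable_fst.ennreal_ofReal).mul (hf.comp continuous_polar.measurable)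
  change ∫⁻ p in Ioi (0:ℝ) ×ˢ Ioo (-π) π, _ = _
  rw [Measure.volume_eq_prod, ← Measure.prod_restrict, lintegral_prod _ hm.aemeasurable]
  refine lintegral_congr fun s => ?_
  simp only
  rw [lintegral_const_mul]
  exact hf.comp (by fun_prop)

lemma polar_integral (f : ℂ → ℝ) (hf : Measurable f) (hfi : Integrable f) :
    ∫ z, f z = ∫ s in Ioi (0:ℝ), s *
      ∫ θ in (-π)..π, f ((s : ℂ) * Complex.exp (θ * Complex.I)) := by
  rw [← Complex.integral_comp_polarCoord_symm]
  simp_rw [polar_symm_eq, smul_eq_mul]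
  have hm : Measurable (fun p : ℝ × ℝ => p.1 * f ((p.1 : ℂ) * Complex.exp (p.2 * Complex.I))) :=
    measurable_fst.mul (hf.comp continuous_polar.measurable)
  change ∫ p in Ioi (0:ℝ) ×ˢ Ioo (-π) π, _ = _
  have hi : Integrable (fun p : ℝ × ℝ => p.1 * f ((p.1 : ℂ) * Complex.exp (p.2 * Complex.I)))
      ((volume.restrict (Ioi (0:ℝ))).prod (volume.restrict (Ioo (-π) π))) := by
    refine ⟨hm.aestronglyMeasurable, ?_⟩
    have h2 := hfi.2
    rw [hasFiniteIntegral_iff_enorm, ← Complex.lintegral_comp_polarCoord_symm] at h2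
    rw [hasFiniteIntegral_iff_enorm]
    simp_rw [polar_symm_eq, smul_eq_mul] at h2
    change ∫⁻ p in Ioi (0:ℝ) ×ˢ Ioo (-π) π, _ < _ at h2
    rw [Measure.prod_restrict, ← Measure.volume_eq_prod]
    refine lt_of_eq_of_lt ?_ h2
    refine setLIntegral_congr_fun (measurableSet_Ioi.prod measurableSet_Ioo) ?_
    rintro ⟨s, θ⟩ ⟨hs, -⟩
    simp only [enorm_mul, Real.enorm_eq_ofReal (le_of_lt (show 0 < s from hs))]
  rw [Measure.volume_eq_prod, ← Measure.prod_restrict, integral_prod _ hi]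
  refine integral_congr_ae (Eventually.of_forall fun s => ?_)
  simp only
  rw [intervalIntegral.integral_of_le (by linarith [pi_pos]), integral_Ioc_eq_integral_Ioo, integral_const_mul]

lemma lint_inv_norm (y : ℂ) (R : ℝ) (hR : 0 < R) :
    ∫⁻ x in ball y R, ENNReal.ofReal (‖x - y‖⁻¹) = ENNReal.ofReal (2 * π * R) := by
  rw [← lintegral_indicator measurableSet_ball]
  rw [← lintegral_add_right_eq_self _ y]
  have hm : Measurable (fun x : ℂ => (ball (0:ℂ) R).indicator (fun x => ENNReal.ofReal (‖x‖⁻¹)) x) :=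
    (by fun_prop : Measurable (fun x : ℂ => ENNReal.ofReal (‖x‖⁻¹))).indicator measurableSet_ball
  have e : ∀ x : ℂ, (ball y R).indicator (fun x => ENNReal.ofReal (‖x - y‖⁻¹)) (x + y) =
      (ball (0:ℂ) R).indicator (fun x => ENNReal.ofReal (‖x‖⁻¹)) x := by
    intro x
    simp [indicator, mem_ball, dist_eq_norm]
  simp_rw [e]
  rw [polar_lintegral _ hm]
  have : ∀ s ∈ Ioi (0:ℝ), ENNReal.ofReal s * ∫⁻ θ in Ioo (-π) π,
      (ball (0:ℂ) R).indicator (fun x => ENNReal.ofReal (‖x‖⁻¹)) ((s : ℂ) * Complex.exp (θ * Complex.I))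
      = (Iio R).indicator (fun _ => ENNReal.ofReal (2 * π)) s := by
    intro s hs
    have hs0 : 0 < s := hs
    by_cases h : s < R
    · have : ∀ θ : ℝ, (ball (0:ℂ) R).indicator (fun x => ENNReal.ofReal (‖x‖⁻¹)) ((s : ℂ) * Complex.exp (θ * Complex.I)) = ENNReal.ofReal s⁻¹ := by
        intro θ
        rw [indicator_of_mem, norm_polar, abs_of_pos hs0]
        rw [mem_ball_zero_iff, norm_polar, abs_of_pos hs0]; exact h
      simp_rw [this]
      rw [indicator_of_mem (show s ∈ Iio R from h)]
      simp only [lintegral_const, Measure.restrict_apply MeasurableSet.univ, univ_inter, Real.volume_Ioo]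
      rw [← mul_assoc, ← ENNReal.ofReal_mul hs0.le, mul_inv_cancel₀ hs0.ne']
      rw [ENNReal.ofReal_one, one_mul]; congr 1; ring
    · have : ∀ θ : ℝ, (ball (0:ℂ) R).indicator (fun x => ENNReal.ofReal (‖x‖⁻¹)) ((s : ℂ) * Complex.exp (θ * Complex.I)) = 0 := by
        intro θ
        rw [indicator_of_notMem]
        rw [mem_ball_zero_iff, norm_polar, abs_of_pos hs0]; exact h
      simp_rw [this]
      rw [indicator_of_notMem (show s ∉ Iio R from h)]
      simp
  rw [setLIntegral_congr_fun measurableSet_Ioi this, lintegral_indicator measurableSet_Iio,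
    Measure.restrict_restrict measurableSet_Iio]
  simp only [lintegral_const, Measure.restrict_apply MeasurableSet.univ, univ_inter]
  rw [show Iio R ∩ Ioi (0:ℝ) = Ioo 0 R by ext; simp [and_comm], Real.volume_Ioo,
    ← ENNReal.ofReal_mul (by positivity)]
  simp

lemma volume_ball_complex (y : ℂ) (R : ℝ) (hR : 0 ≤ R) : volume (ball y R) = ENNReal.ofReal (π * R ^ 2) := by
  rw [Complex.volume_ball, ← ENNReal.ofReal_pow hR, mul_comm, ENNReal.ofReal_mul pi_pos.le]
  congr 1
  exact (ENNReal.ofReal_coe_nnreal (p := NNReal.pi)).symm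

lemma lint_inv_norm' (p y : ℂ) (R : ℝ) (hR : 0 < R) :
    ∫⁻ x in ball p R, ENNReal.ofReal (‖x - y‖⁻¹) ≤ ENNReal.ofReal (3 * π * R) := by
  have hsub : ball p R ⊆ ball y R ∪ (ball p R \ ball y R) := by
    intro x hx; by_cases h : x ∈ ball y R
    · exact Or.inl h
    · exact Or.inr ⟨hx, h⟩
  calc _ ≤ ∫⁻ x in ball y R ∪ (ball p R \ ball y R), ENNReal.ofReal (‖x - y‖⁻¹) := lintegral_mono_set hsub
    _ ≤ (∫⁻ x in ball y R, ENNReal.ofReal (‖x - y‖⁻¹)) + ∫⁻ x in (ball p R \ ball y R), ENNReal.ofReal (‖x - y‖⁻¹) :=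
        lintegral_union_le _ _ _
    _ ≤ ENNReal.ofReal (2 * π * R) + ∫⁻ x in (ball p R \ ball y R), ENNReal.ofReal (R⁻¹) := by
        gcongr ?_ + ?_
        · exact (lint_inv_norm y R hR).le
        · refine setLIntegral_mono measurable_const ?_
          rintro x ⟨-, hx⟩
          rw [mem_ball, dist_eq_norm, not_lt] at hx
          apply ENNReal.ofReal_le_ofReal
          gcongr
    _ ≤ ENNReal.ofReal (2 * π * R) + ENNReal.ofReal (R⁻¹) * ENNReal.ofReal (π * R ^ 2) := by
        rw [setLIntegral_const]
        gcongr
        rw [← volume_ball_complex p R hR.le]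
        exact measure_mono sdiff_subset
    _ = ENNReal.ofReal (3 * π * R) := by
        rw [← ENNReal.ofReal_mul (by positivity), ← ENNReal.ofReal_add (by positivity) (by positivity)]
        congr 1; field_simp; ring

lemma abs_log_le (t : ℝ) (ht : 0 ≤ t) : |Real.log t| ≤ t + t⁻¹ := by
  rcases ht.eq_or_lt with rfl | ht
  · simp
  have h1 := Real.log_le_sub_one_of_pos ht
  have h2 := Real.log_le_sub_one_of_pos (inv_pos.2 ht)
  rw [Real.log_inv] at h2
  have := inv_pos.2 ht
  rw [abs_le]; constructor <;> linarith

lemma lint_log (p y : ℂ) (R : ℝ) (hR : 0 < R) :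
    ∫⁻ x in ball p R, ‖Real.log ‖x - y‖‖ₑ ≤ ENNReal.ofReal (3 * π * R + (R + ‖p - y‖) * (π * R ^ 2)) := by
  calc _ ≤ ∫⁻ x in ball p R, (ENNReal.ofReal (‖x - y‖⁻¹) + ENNReal.ofReal (R + ‖p - y‖)) := by
        refine setLIntegral_mono (by fun_prop) fun x hx => ?_
        rw [← ENNReal.ofReal_add (by positivity) (by positivity), ← ofReal_norm_eq_enorm]
        apply ENNReal.ofReal_le_ofReal
        have := abs_log_le ‖x - y‖ (norm_nonneg _)
        rw [mem_ball, dist_eq_norm] at hx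
        have h2 : ‖x - y‖ ≤ ‖x - p‖ + ‖p - y‖ := by simpa using norm_sub_le_norm_sub_add_norm_sub x p y
        rw [Real.norm_eq_abs]; linarith
    _ ≤ ENNReal.ofReal (3 * π * R) + ENNReal.ofReal (R + ‖p - y‖) * ENNReal.ofReal (π * R ^ 2) := by
        rw [lintegral_add_right _ measurable_const, setLIntegral_const, volume_ball_complex _ _ hR.le]
        gcongr
        exact lint_inv_norm' p y R hR
    _ = _ := by
        rw [← ENNReal.ofReal_mul (by positivity), ← ENNReal.ofReal_add (by positivity) (by positivity)]

lemma log_integrableOn (p y : ℂ) (R : ℝ) (hR : 0 < R) :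
    IntegrableOn (fun x => Real.log ‖x - y‖) (ball p R) := by
  refine ⟨(Measurable.aestronglyMeasurable (by fun_prop)), ?_⟩
  rw [hasFiniteIntegral_iff_enorm]
  exact (lint_log p y R hR).trans_lt ENNReal.ofReal_lt_top

lemma circle_log (p y : ℂ) (s : ℝ) (hs : 0 < s) :
    ∫ θ in (-π)..π, Real.log ‖p + (s : ℂ) * Complex.exp (θ * Complex.I) - y‖ = 2 * π * Real.log (max s ‖y - p‖) := by
  have h := circleAverage_log_norm_sub_const_eq_log_radius_add_posLog (a := y) (c := p) hs.ne'
  rw [circleAverage_def] at h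
  simp only [circleMap, smul_eq_mul] at h
  have hper : Function.Periodic (fun θ : ℝ => Real.log ‖p + (s : ℂ) * Complex.exp (θ * Complex.I) - y‖) (2 * π) := by
    intro θ
    have : Complex.exp (((θ + 2 * π : ℝ) : ℂ) * Complex.I) = Complex.exp (θ * Complex.I) := by
      push_cast; rw [add_mul]; exact Complex.exp_periodic _
    simp only [this]
  have h3 := hper.intervalIntegral_add_eq (-π) 0
  rw [show -π + 2 * π = π by ring, zero_add] at h3
  rw [h3]
  have h4 : Real.log s + Real.posLog (s⁻¹ * ‖p - y‖) = Real.log (max s ‖y - p‖) := by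
    rw [norm_sub_rev y p]
    rw [Real.posLog_eq_log_max_one (by positivity), ← Real.log_mul hs.ne' (by positivity), mul_max_of_nonneg _ _ hs.le]
    congr 2
    · ring
    · field_simp
  rw [← h4, ← h, ← mul_assoc, mul_inv_cancel₀ (by positivity), one_mul]

lemma log_lap_radial (h : ℝ → ℝ) (hh : ContDiff ℝ (⊤ : ℕ∞) h) (b : ℝ) (hb : 0 < b)
    (hz : ∀ q, b ^ 2 ≤ q → h q = 0) (p y : ℂ) :
    ∫ x, Real.log ‖x - y‖ * lap (fun w => h (‖w - p‖ ^ 2)) x = 2 * π * h (‖y - p‖ ^ 2) := by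
  have hh' : ContDiff ℝ (⊤ : ℕ∞) (deriv h) := (contDiff_infty_iff_deriv.1 hh).2
  have hh'' : ContDiff ℝ (⊤ : ℕ∞) (deriv (deriv h)) := (contDiff_infty_iff_deriv.1 hh').2
  have c1 := hh'.continuous
  have c2 := hh''.continuous
  set k : ℝ → ℝ := fun q => 4 * (deriv h q + q * deriv (deriv h) q) with hk
  have hkc : Continuous k := by simp only [hk]; fun_prop
  have hkz : ∀ q, b ^ 2 < q → k q = 0 := by
    intro q hq
    have e : h =ᶠ[𝓝 q] fun _ => 0 := by
      filter_upwards [eventually_gt_nhds hq] with t ht using hz t ht.le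
    have e1 := e.deriv
    have e2 := e1.deriv
    simp only [hk, e1.eq_of_nhds, e2.eq_of_nhds]; simp
  simp_rw [lap_radial h hh]
  change ∫ x, Real.log ‖x - y‖ * k (‖x - p‖ ^ 2) = _
  rw [← integral_add_right_eq_self _ p]
  have e : ∀ x : ℂ, Real.log ‖x + p - y‖ * k (‖x + p - p‖ ^ 2) = Real.log ‖p + x - y‖ * k (‖x‖ ^ 2) := by
    intro x; rw [add_sub_cancel_right, add_comm x p]
  simp_rw [e]
  have hm : Measurable (fun x : ℂ => Real.log ‖p + x - y‖ * k (‖x‖ ^ 2)) := by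
    have := hkc.measurable
    fun_prop
  have hi : Integrable (fun x : ℂ => Real.log ‖p + x - y‖ * k (‖x‖ ^ 2)) := by
    have h1 : IntegrableOn (fun x : ℂ => Real.log ‖p + x - y‖ * k (‖x‖ ^ 2)) (ball 0 (b + 1)) := by
      have h2 := log_integrableOn 0 (y - p) (b + 1) (by linarith)
      have e : (fun x : ℂ => Real.log ‖p + x - y‖) = fun x => Real.log ‖x - (y - p)‖ := by
        ext x; congr 2; ring
      obtain ⟨C, hC⟩ := (isCompact_Icc (a := (0:ℝ)) (b := (b+1)^2)).exists_bound_of_continuousOn hkc.continuousOn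
      refine Integrable.mul_bdd (c := C) (by rw [e]; exact h2) (by fun_prop) ?_
      refine (ae_restrict_iff' measurableSet_ball).2 (Eventually.of_forall fun x hx => ?_)
      rw [mem_ball_zero_iff] at hx
      exact hC _ ⟨by positivity, by gcongr⟩
    refine (integrableOn_iff_integrable_of_support_subset ?_).1 h1
    intro x hx
    by_contra hx'
    apply hx
    rw [mem_ball_zero_iff, not_lt] at hx'
    simp only
    rw [hkz, mul_zero]
    have : b < ‖x‖ := by linarith
    gcongr
  rw [polar_integral _ hm hi]
  have : ∀ s ∈ Ioi (0:ℝ), s * ∫ θ in (-π)..π, Real.log ‖p + (s : ℂ) * Complex.exp (θ * Complex.I) - y‖ *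
      k (‖(s : ℂ) * Complex.exp (θ * Complex.I)‖ ^ 2) = 2 * π * (Real.log (max s ‖y - p‖) * (s * k (s ^ 2))) := by
    intro s hs
    simp_rw [norm_polar, sq_abs]
    rw [intervalIntegral.integral_mul_const, circle_log _ _ _ hs]
    ring
  rw [setIntegral_congr_fun measurableSet_Ioi this, integral_const_mul]
  congr 1
  have h5 := log_radial_oneD h hh b ‖y - p‖ hb (norm_nonneg _) hz
  change ∫ s in (0:ℝ)..b, Real.log (max s ‖y - p‖) * (s * k (s^2)) = _ at h5
  rw [← h5, intervalIntegral.integral_of_le hb.le]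
  refine setIntegral_eq_of_subset_of_forall_sdiff_eq_zero measurableSet_Ioi Ioc_subset_Ioi_self ?_
  rintro s ⟨hs, hs'⟩
  have : b < s := by
    by_contra hcon
    exact hs' ⟨hs, not_lt.1 hcon⟩
  rw [hkz, mul_zero, mul_zero]
  gcongr

def pot (ν : Measure ℂ) (x : ℂ) : ℝ := -(1 / (2 * π)) * ∫ y, Real.log ‖x - y‖ ∂ν

lemma ae_smul_real (c : ℝ) (hc : c ≠ 0) (P : ℂ → Prop) (h : ∀ᵐ x : ℂ, P x) : ∀ᵐ z : ℂ, P (c • z) := by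
  rw [ae_iff] at h ⊢
  have : {a : ℂ | ¬ P (c • a)} = (fun x : ℂ => c • x) ⁻¹' {a | ¬ P a} := rfl
  rw [this, Measure.addHaar_preimage_smul volume hc, h, mul_zero]

lemma log_meas_prod : Measurable (fun q : ℂ × ℂ => Real.log ‖q.1 - q.2‖) := by fun_prop

lemma pot_int_prod (ν : Measure ℂ) [IsFiniteMeasure ν] (hν : ν (ball (0:ℂ) 1)ᶜ = 0) (R : ℝ) (hR : 0 < R) :
    Integrable (fun q : ℂ × ℂ => Real.log ‖q.1 - q.2‖) ((volume.restrict (ball (0:ℂ) R)).prod ν) := by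
  refine ⟨log_meas_prod.aestronglyMeasurable, ?_⟩
  rw [hasFiniteIntegral_iff_enorm, lintegral_prod_symm _ log_meas_prod.enorm.aemeasurable]
  have hy : ∀ᵐ y ∂ν, y ∈ ball (0:ℂ) 1 := by
    rw [ae_iff]; exact hν
  calc _ ≤ ∫⁻ y, ENNReal.ofReal (3 * π * R + (R + 1) * (π * R ^ 2)) ∂ν := by
        refine lintegral_mono_ae ?_
        filter_upwards [hy] with y hy
        refine (lint_log 0 y R hR).trans (ENNReal.ofReal_le_ofReal ?_)
        rw [mem_ball_zero_iff] at hy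
        rw [zero_sub, norm_neg]
        gcongr
    _ < ⊤ := by
        rw [lintegral_const]
        exact ENNReal.mul_lt_top ENNReal.ofReal_lt_top (measure_lt_top _ _)

lemma pot_ae_int (ν : Measure ℂ) [IsFiniteMeasure ν] (hν : ν (ball (0:ℂ) 1)ᶜ = 0) :
    ∀ᵐ x : ℂ, Integrable (fun y => Real.log ‖x - y‖) ν := by
  have h : ∀ n : ℕ, ∀ᵐ x : ℂ, x ∈ ball (0:ℂ) (n + 1) → Integrable (fun y => Real.log ‖x - y‖) ν := by
    intro n
    rw [← ae_restrict_iff' measurableSet_ball]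
    exact (pot_int_prod ν hν (n + 1) (by positivity)).prod_right_ae
  filter_upwards [ae_all_iff.2 h] with x hx
  obtain ⟨n, hn⟩ := exists_nat_gt ‖x‖
  exact hx n (by rw [mem_ball_zero_iff]; linarith)

lemma pot_meas (ν : Measure ℂ) [IsFiniteMeasure ν] : Measurable (pot ν) := by
  have := log_meas_prod.stronglyMeasurable.integral_prod_right' (ν := ν)
  exact this.measurable.const_mul _

lemma pot_intOn (ν : Measure ℂ) [IsFiniteMeasure ν] (hν : ν (ball (0:ℂ) 1)ᶜ = 0) (R : ℝ) (hR : 0 < R) :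
    IntegrableOn (pot ν) (ball (0:ℂ) R) :=
  (pot_int_prod ν hν R hR).integral_prod_left.const_mul _

lemma pot_lower (ν : Measure ℂ) [IsFiniteMeasure ν] (hν : ν (ball (0:ℂ) 1)ᶜ = 0) :
    ∃ C : ℝ, ∀ x ∈ ball (0:ℂ) 1, -C ≤ pot ν x := by
  refine ⟨(1 / (2 * π)) * (ν.real univ * Real.log 2), fun x hx => ?_⟩
  have hy : ∀ᵐ y ∂ν, y ∈ ball (0:ℂ) 1 := by
    rw [ae_iff]; exact hν
  unfold pot
  have : ∫ y, Real.log ‖x - y‖ ∂ν ≤ ν.real univ * Real.log 2 := by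
    by_cases hi : Integrable (fun y => Real.log ‖x - y‖) ν
    · rw [← smul_eq_mul, ← integral_const]
      refine integral_mono_ae hi (integrable_const _) ?_
      filter_upwards [hy] with y hy
      rw [mem_ball_zero_iff] at hx hy
      by_cases h0 : ‖x - y‖ = 0
      · simp only [h0, Real.log_zero]; exact Real.log_nonneg (by norm_num)
      · apply Real.log_le_log (by positivity)
        have := norm_sub_le x y
        linarith
    · rw [integral_undef hi]
      have := Real.log_nonneg (show (1:ℝ) ≤ 2 by norm_num)
      positivity
  have h2 := mul_le_mul_of_nonneg_left this (show 0 ≤ 1 / (2 * π) by positivity)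
  linarith

lemma pot_lap (ν : Measure ℂ) [IsFiniteMeasure ν] (hν : ν (ball (0:ℂ) 1)ᶜ = 0)
    (h : ℝ → ℝ) (hh : ContDiff ℝ (⊤ : ℕ∞) h) (b : ℝ) (hb : 0 < b)
    (hz : ∀ q, b ^ 2 ≤ q → h q = 0) (p : ℂ) :
    ∫ x, pot ν x * lap (fun w => h (‖w - p‖ ^ 2)) x = - ∫ y, h (‖y - p‖ ^ 2) ∂ν := by
  have hh' : ContDiff ℝ (⊤ : ℕ∞) (deriv h) := (contDiff_infty_iff_deriv.1 hh).2
  have hh'' : ContDiff ℝ (⊤ : ℕ∞) (deriv (deriv h)) := (contDiff_infty_iff_deriv.1 hh').2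
  have c1 := hh'.continuous
  have c2 := hh''.continuous
  set k : ℂ → ℝ := fun x => lap (fun w => h (‖w - p‖ ^ 2)) x with hk
  have hkc : Continuous k := by
    simp only [hk, lap_radial h hh]; fun_prop
  have hkz : ∀ x, b + ‖p‖ < ‖x‖ → k x = 0 := by
    intro x hx
    have hq : b ^ 2 < ‖x - p‖ ^ 2 := by
      have := norm_sub_norm_le x p
      gcongr; linarith
    have e : h =ᶠ[𝓝 (‖x - p‖ ^ 2)] fun _ => 0 := by
      filter_upwards [eventually_gt_nhds hq] with t ht using hz t ht.le
    have e1 := e.deriv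
    have e2 := e1.deriv
    simp only [hk, lap_radial h hh, e1.eq_of_nhds, e2.eq_of_nhds]; simp
  set R := b + ‖p‖ + 1 with hR
  have hRp : 0 < R := by positivity
  have hset : ∀ F : ℂ → ℝ, ∫ x, F x * k x = ∫ x in ball 0 R, F x * k x := by
    intro F
    symm
    apply setIntegral_eq_integral_of_forall_compl_eq_zero
    intro x hx
    rw [mem_ball_zero_iff, not_lt] at hx
    rw [hkz x (by linarith), mul_zero]
  rw [hset]
  obtain ⟨C, hC⟩ := (isCompact_closedBall (0:ℂ) R).exists_bound_of_continuousOn hkc.continuousOn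
  have hInteg : Integrable (fun q : ℂ × ℂ => Real.log ‖q.1 - q.2‖ * k q.1) ((volume.restrict (ball (0:ℂ) R)).prod ν) := by
    refine Integrable.mul_bdd (c := C) (pot_int_prod ν hν R hRp) (by fun_prop) ?_
    have h1 : ∀ᵐ x ∂(volume.restrict (ball (0:ℂ) R)), ‖k x‖ ≤ C :=
      (ae_restrict_iff' measurableSet_ball).2 (Eventually.of_forall fun x hx => hC x (ball_subset_closedBall hx))
    exact Measure.quasiMeasurePreserving_fst.ae h1
  calc ∫ x in ball 0 R, pot ν x * k x = ∫ x in ball 0 R, -(1 / (2 * π)) * ∫ y, Real.log ‖x - y‖ * k x ∂ν := by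
        congr 1; ext x; rw [integral_mul_const]; unfold pot; ring
    _ = -(1 / (2 * π)) * ∫ y, ∫ x in ball 0 R, Real.log ‖x - y‖ * k x ∂volume ∂ν := by
        rw [integral_const_mul, integral_integral_swap hInteg]
    _ = -(1 / (2 * π)) * ∫ y, 2 * π * h (‖y - p‖ ^ 2) ∂ν := by
        congr 2; ext y
        rw [← hset, ← log_lap_radial h hh b hb hz p y]
    _ = _ := by
        rw [integral_const_mul, ← mul_assoc]
        field_simp

def kr (r : ℝ) (y : ℂ) : ℝ := if 8 * r ≤ ‖y‖ then 32 * r / ‖y‖ else 24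

lemma log_diff_le (a b : ℝ) (ha : 0 < a) (hb : 0 < b) :
    |Real.log a - Real.log b| ≤ |a - b| * (a⁻¹ + b⁻¹) := by
  have key : ∀ a b : ℝ, 0 < a → 0 < b → Real.log a - Real.log b ≤ |a - b| * (a⁻¹ + b⁻¹) := by
    intro a b ha hb
    rw [← Real.log_div ha.ne' hb.ne']
    have h1 := Real.log_le_sub_one_of_pos (div_pos ha hb)
    have h2 : a / b - 1 = (a - b) * b⁻¹ := by field_simp
    have h3 : (a - b) * b⁻¹ ≤ |a - b| * b⁻¹ := by gcongr; exact le_abs_self _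
    have h4 : 0 ≤ |a - b| * a⁻¹ := by positivity
    nlinarith
  rw [abs_le]
  constructor
  · have := key b a hb ha
    rw [abs_sub_comm, add_comm] at this; linarith
  · exact key a b ha hb

lemma exp_sub_one_le (t : ℝ) (ht : 0 < t) (h2 : Real.exp t ≤ 2) : Real.exp t - 1 ≤ 2 * t := by
  have h1 := Real.add_one_le_exp (-t)
  rw [Real.exp_neg] at h1
  have h3 : Real.exp t * (Real.exp t)⁻¹ = 1 := mul_inv_cancel₀ (Real.exp_pos t).ne'
  have := Real.exp_pos t
  nlinarith

lemma kernel_quot (t r : ℝ) (ht : 0 < t) (h2 : Real.exp t ≤ 2) (hr : 0 < r) (y : ℂ) :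
    ∫⁻ z in ball (0:ℂ) (2 * r), ‖Real.log ‖Real.exp t • z - y‖ - Real.log ‖z - y‖‖ₑ ≤
      ENNReal.ofReal (2 * π * t * (r ^ 2 * kr r y)) := by
  have h1t : 1 ≤ Real.exp t := Real.one_le_exp ht.le
  have hne : ∀ w : ℂ, ∀ᵐ z : ℂ, z ≠ w := fun w => by
    rw [ae_iff]; simp
  have hae : ∀ᵐ z : ℂ, z ∈ ball (0:ℂ) (2 * r) → ‖Real.log ‖Real.exp t • z - y‖ - Real.log ‖z - y‖‖ₑ ≤
      ENNReal.ofReal (4 * r * t * (‖Real.exp t • z - y‖⁻¹ + ‖z - y‖⁻¹)) := by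
    filter_upwards [hne y, ae_smul_real (Real.exp t) (Real.exp_pos t).ne' _ (hne y)] with z h1 h3 hz
    rw [mem_ball_zero_iff] at hz
    rw [← ofReal_norm]
    apply ENNReal.ofReal_le_ofReal
    have ha : 0 < ‖Real.exp t • z - y‖ := norm_pos_iff.2 (sub_ne_zero.2 h3)
    have hb : 0 < ‖z - y‖ := norm_pos_iff.2 (sub_ne_zero.2 h1)
    refine (log_diff_le _ _ ha hb).trans ?_
    gcongr
    refine (abs_norm_sub_norm_le _ _).trans ?_
    have : Real.exp t • z - y - (z - y) = (Real.exp t - 1) • z := by rw [sub_smul, one_smul]; ring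
    rw [this, norm_smul, Real.norm_eq_abs, abs_of_nonneg (by linarith)]
    have := exp_sub_one_le t ht h2
    calc _ ≤ (2 * t) * (2 * r) := by gcongr
      _ = _ := by ring
  refine (setLIntegral_mono_ae' measurableSet_ball hae).trans ?_
  unfold kr
  split_ifs with hy
  · have hy0 : 0 < ‖y‖ := by linarith
    calc _ ≤ ∫⁻ z in ball (0:ℂ) (2 * r), ENNReal.ofReal (4 * r * t * (4 / ‖y‖)) := by
          refine setLIntegral_mono measurable_const fun z hz => ENNReal.ofReal_le_ofReal ?_
          rw [mem_ball_zero_iff] at hz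
          have e1 : ‖y‖ / 2 ≤ ‖Real.exp t • z - y‖ := by
            have := norm_sub_norm_le y (Real.exp t • z)
            rw [norm_sub_rev, norm_smul, Real.norm_eq_abs, abs_of_pos (Real.exp_pos t)] at this
            have : Real.exp t * ‖z‖ ≤ 2 * (2 * r) := by gcongr
            linarith
          have e2 : ‖y‖ / 2 ≤ ‖z - y‖ := by
            have := norm_sub_norm_le y z
            rw [norm_sub_rev] at this
            linarith
          have e3 : ‖Real.exp t • z - y‖⁻¹ ≤ (‖y‖ / 2)⁻¹ := by gcongr
          have e4 : ‖z - y‖⁻¹ ≤ (‖y‖ / 2)⁻¹ := by gcongr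
          have e5 : 4 / ‖y‖ = (‖y‖ / 2)⁻¹ + (‖y‖ / 2)⁻¹ := by field_simp; ring
          rw [e5]
          gcongr
      _ ≤ _ := by
          rw [setLIntegral_const, volume_ball_complex _ _ (by positivity), ← ENNReal.ofReal_mul (by positivity)]
          apply ENNReal.ofReal_le_ofReal
          apply le_of_eq; ring
  · have e1 : ∀ z : ℂ, ‖Real.exp t • z - y‖⁻¹ ≤ ‖z - (Real.exp t)⁻¹ • y‖⁻¹ := by
      intro z
      have : Real.exp t • z - y = Real.exp t • (z - (Real.exp t)⁻¹ • y) := by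
        rw [smul_sub, smul_inv_smul₀ (Real.exp_pos t).ne']
      rw [this, norm_smul, Real.norm_eq_abs, abs_of_pos (Real.exp_pos t), mul_inv]
      have h5 : (Real.exp t)⁻¹ ≤ 1 := inv_le_one_of_one_le₀ h1t
      have : 0 ≤ ‖z - (Real.exp t)⁻¹ • y‖⁻¹ := by positivity
      nlinarith
    calc _ ≤ ∫⁻ z in ball (0:ℂ) (2 * r), ENNReal.ofReal (4 * r * t) *
          (ENNReal.ofReal (‖z - (Real.exp t)⁻¹ • y‖⁻¹) + ENNReal.ofReal (‖z - y‖⁻¹)) := by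
          refine lintegral_mono fun z => ?_
          simp only
          rw [← ENNReal.ofReal_add (by positivity) (by positivity), ← ENNReal.ofReal_mul (by positivity)]
          apply ENNReal.ofReal_le_ofReal
          exact mul_le_mul_of_nonneg_left (add_le_add (e1 z) le_rfl) (by positivity)
      _ ≤ ENNReal.ofReal (4 * r * t) * (ENNReal.ofReal (3 * π * (2 * r)) + ENNReal.ofReal (3 * π * (2 * r))) := by
          rw [lintegral_const_mul _ (by fun_prop), lintegral_add_left (by fun_prop)]
          gcongr
          · exact lint_inv_norm' _ _ _ (by positivity)
          · exact lint_inv_norm' _ _ _ (by positivity)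
      _ ≤ _ := by
          rw [← ENNReal.ofReal_add (by positivity) (by positivity), ← ENNReal.ofReal_mul (by positivity)]
          apply ENNReal.ofReal_le_ofReal
          apply le_of_eq; ring

lemma pot_quot (ν : Measure ℂ) [IsFiniteMeasure ν] (hν : ν (ball (0:ℂ) 1)ᶜ = 0)
    (t r : ℝ) (ht : 0 < t) (h2 : Real.exp t ≤ 2) (hr : 0 < r) :
    ∫⁻ z in ball (0:ℂ) (2 * r), ‖(pot ν (Real.exp t • z) - pot ν z) / t‖ₑ ≤
      ENNReal.ofReal (r ^ 2) * ∫⁻ y, ENNReal.ofReal (kr r y) ∂ν := by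
  have hae : ∀ᵐ z : ℂ, z ∈ ball (0:ℂ) (2 * r) → ‖(pot ν (Real.exp t • z) - pot ν z) / t‖ₑ ≤
      ENNReal.ofReal (1 / (2 * π * t)) * ∫⁻ y, ‖Real.log ‖Real.exp t • z - y‖ - Real.log ‖z - y‖‖ₑ ∂ν := by
    filter_upwards [pot_ae_int ν hν, ae_smul_real (Real.exp t) (Real.exp_pos t).ne' _ (pot_ae_int ν hν)] with z i1 i2 _
    have : (pot ν (Real.exp t • z) - pot ν z) / t =
        -(1 / (2 * π * t)) * ∫ y, (Real.log ‖Real.exp t • z - y‖ - Real.log ‖z - y‖) ∂ν := by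
      rw [integral_sub i2 i1]; unfold pot; field_simp; ring
    rw [this, enorm_mul]
    gcongr
    · rw [enorm_neg, Real.enorm_eq_ofReal (by positivity)]
    · exact enorm_integral_le_lintegral_enorm _
  have hm : Measurable (fun q : ℂ × ℂ => ‖Real.log ‖Real.exp t • q.1 - q.2‖ - Real.log ‖q.1 - q.2‖‖ₑ) := by
    fun_prop
  calc _ ≤ ∫⁻ z in ball (0:ℂ) (2 * r), ENNReal.ofReal (1 / (2 * π * t)) *
        ∫⁻ y, ‖Real.log ‖Real.exp t • z - y‖ - Real.log ‖z - y‖‖ₑ ∂ν :=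
        setLIntegral_mono_ae' measurableSet_ball hae
    _ = ENNReal.ofReal (1 / (2 * π * t)) * ∫⁻ y, ∫⁻ z in ball (0:ℂ) (2 * r),
        ‖Real.log ‖Real.exp t • z - y‖ - Real.log ‖z - y‖‖ₑ ∂volume ∂ν := by
        rw [lintegral_const_mul _ hm.lintegral_prod_right', lintegral_lintegral_swap hm.aemeasurable]
    _ ≤ ENNReal.ofReal (1 / (2 * π * t)) * ∫⁻ y, ENNReal.ofReal (2 * π * t) * (ENNReal.ofReal (r ^ 2) * ENNReal.ofReal (kr r y)) ∂ν := by
        gcongr with y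
        refine (kernel_quot t r ht h2 hr y).trans ?_
        rw [← ENNReal.ofReal_mul (by positivity), ← ENNReal.ofReal_mul (by positivity)]
    _ = _ := by
        have hkm : Measurable (fun y => kr r y) := by
          unfold kr
          refine Measurable.ite (measurableSet_le measurable_const (by fun_prop)) (by fun_prop) measurable_const
        rw [lintegral_const_mul _ (by fun_prop), lintegral_const_mul _ (by fun_prop), ← mul_assoc,
          ← ENNReal.ofReal_mul (by positivity)]
        rw [show 1 / (2 * π * t) * (2 * π * t) = 1 by field_simp]
        simp

lemma kr_tendsto (ν : Measure ℂ) [IsFiniteMeasure ν] (h0 : ν {0} = 0) :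
    Tendsto (fun r : ℝ => ∫⁻ y, ENNReal.ofReal (kr r y) ∂ν) (𝓝[>] 0) (𝓝 0) := by
  have hkm : ∀ r, Measurable (fun y => kr r y) := by
    intro r
    unfold kr
    refine Measurable.ite (measurableSet_le measurable_const (by fun_prop)) (by fun_prop) measurable_const
  have := tendsto_lintegral_filter_of_dominated_convergence (μ := ν) (l := 𝓝[>] (0:ℝ))
    (F := fun r y => ENNReal.ofReal (kr r y)) (f := fun _ => 0) (fun _ => ENNReal.ofReal 24) ?_ ?_ ?_ ?_
  · simpa using this
  · exact Eventually.of_forall fun r => (hkm r).ennreal_ofReal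
  · filter_upwards [self_mem_nhdsWithin] with r hr
    refine Eventually.of_forall fun y => ENNReal.ofReal_le_ofReal ?_
    have hr : 0 < r := hr
    unfold kr; split_ifs with h
    · rw [div_le_iff₀ (by linarith)]; linarith
    · exact le_rfl
  · rw [lintegral_const]; exact (ENNReal.mul_lt_top ENNReal.ofReal_lt_top (measure_lt_top _ _)).ne
  · have : ∀ᵐ y ∂ν, y ≠ 0 := by rw [ae_iff]; simpa using h0
    filter_upwards [this] with y hy
    have hy0 : 0 < ‖y‖ := norm_pos_iff.2 hy
    have h1 : Tendsto (fun r : ℝ => ENNReal.ofReal (32 * r / ‖y‖)) (𝓝[>] 0) (𝓝 0) := by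
      have : Tendsto (fun r : ℝ => 32 * r / ‖y‖) (𝓝 0) (𝓝 (32 * 0 / ‖y‖)) :=
        Continuous.tendsto (by fun_prop) 0
      have h3 := ENNReal.tendsto_ofReal (this.mono_left (nhdsWithin_le_nhds (s := Ioi 0)))
      simpa using h3
    refine h1.congr' ?_
    have : ∀ᶠ r : ℝ in 𝓝 0, r < ‖y‖ / 8 := eventually_lt_nhds (by positivity)
    filter_upwards [nhdsWithin_le_nhds this] with r hr
    unfold kr; rw [if_pos (by linarith)]

def sg (q : ℝ) : ℝ := Real.smoothTransition (4 / 3 * (1 - q))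
def mo (q : ℝ) : ℝ := -(1 / π) * deriv sg q
def ka (a q : ℝ) : ℝ := (a ^ 2)⁻¹ * mo (q / a ^ 2)

lemma sg_smooth : ContDiff ℝ (⊤ : ℕ∞) sg := by
  unfold sg; exact Real.smoothTransition.contDiff.comp (by fun_prop)
lemma sg_one (q : ℝ) (h : q ≤ 1 / 4) : sg q = 1 :=
  Real.smoothTransition.one_of_one_le (by linarith)
lemma sg_zero (q : ℝ) (h : 1 ≤ q) : sg q = 0 :=
  Real.smoothTransition.zero_of_nonpos (by linarith)
lemma mo_smooth : ContDiff ℝ (⊤ : ℕ∞) mo := by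
  unfold mo
  exact contDiff_const.mul (contDiff_infty_iff_deriv.1 sg_smooth).2
lemma mo_zero (q : ℝ) (h : 1 ≤ q) : mo q = 0 := by
  have h1 : HasDerivWithinAt sg (deriv sg q) (Ici q) q :=
    ((sg_smooth.differentiable (by simp)).differentiableAt).hasDerivAt.hasDerivWithinAt
  have h2 : HasDerivWithinAt sg 0 (Ici q) q :=
    (hasDerivWithinAt_const q (Ici q) (0:ℝ)).congr (fun x hx => sg_zero x (h.trans hx)) (sg_zero q h)
  have := (uniqueDiffOn_Ici q q self_mem_Ici).eq_deriv _ h1 h2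
  simp [mo, this]
lemma ka_smooth (a : ℝ) : ContDiff ℝ (⊤ : ℕ∞) (ka a) := by
  unfold ka
  exact contDiff_const.mul (mo_smooth.comp (by fun_prop))
lemma ka_zero (a q : ℝ) (ha : 0 < a) (h : a ^ 2 ≤ q) : ka a q = 0 := by
  unfold ka
  rw [mo_zero, mul_zero]
  rw [le_div_iff₀ (by positivity)]; linarith

lemma mo_bdd : ∃ C : ℝ, 0 ≤ C ∧ (∀ q, 0 ≤ q → |mo q| ≤ C) ∧ (∀ q, 0 ≤ q → |deriv mo q| ≤ C) := by
  have hd : ContDiff ℝ (⊤ : ℕ∞) (deriv mo) := (contDiff_infty_iff_deriv.1 mo_smooth).2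
  obtain ⟨C1, h1⟩ := (isCompact_Icc (a := (0:ℝ)) (b := 1)).exists_bound_of_continuousOn mo_smooth.continuous.continuousOn
  obtain ⟨C2, h2⟩ := (isCompact_Icc (a := (0:ℝ)) (b := 1)).exists_bound_of_continuousOn hd.continuous.continuousOn
  refine ⟨max (max C1 C2) 0, le_max_right _ _, fun q hq => ?_, fun q hq => ?_⟩
  · by_cases h : q ≤ 1
    · exact (h1 q ⟨hq, h⟩).trans ((le_max_left _ _).trans (le_max_left _ _))
    · rw [mo_zero q (by linarith), abs_zero]; exact le_max_right _ _
  · by_cases h : q ≤ 1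
    · exact (h2 q ⟨hq, h⟩).trans ((le_max_right _ _).trans (le_max_left _ _))
    · have : mo =ᶠ[𝓝 q] fun _ => 0 := by
        filter_upwards [eventually_gt_nhds (not_le.1 h)] with t ht using mo_zero t (le_of_lt ht)
      rw [this.deriv_eq]; simp

lemma ka_integral (a : ℝ) (ha : 0 < a) (p : ℂ) : ∫ x : ℂ, ka a (‖x - p‖ ^ 2) = 1 := by
  rw [← integral_add_right_eq_self _ p]
  simp only [add_sub_cancel_right]
  have hc : Continuous (fun x : ℂ => ka a (‖x‖ ^ 2)) := by
    have := (ka_smooth a).continuous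
    fun_prop
  have hcs : HasCompactSupport (fun x : ℂ => ka a (‖x‖ ^ 2)) := by
    refine HasCompactSupport.intro (isCompact_closedBall (0:ℂ) a) fun x hx => ka_zero a _ ha ?_
    rw [mem_closedBall_zero_iff, not_le] at hx
    gcongr
  rw [polar_integral _ hc.measurable (hc.integrable_of_hasCompactSupport hcs)]
  have e : ∀ s ∈ Ioi (0:ℝ), s * ∫ θ in (-π)..π, ka a (‖(s : ℂ) * Complex.exp (θ * Complex.I)‖ ^ 2)
      = 2 * π * (s * ka a (s ^ 2)) := by
    intro s hs
    simp_rw [norm_polar, sq_abs]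
    rw [intervalIntegral.integral_const, smul_eq_mul]; ring
  rw [setIntegral_congr_fun measurableSet_Ioi e]
  have h1 : ∫ s in Ioi (0:ℝ), 2 * π * (s * ka a (s ^ 2)) = ∫ s in (0:ℝ)..a, 2 * π * (s * ka a (s ^ 2)) := by
    rw [intervalIntegral.integral_of_le ha.le]
    refine setIntegral_eq_of_subset_of_forall_sdiff_eq_zero measurableSet_Ioi Ioc_subset_Ioi_self ?_
    rintro s ⟨hs, hs'⟩
    have : a < s := by
      by_contra hcon
      exact hs' ⟨hs, not_lt.1 hcon⟩
    rw [ka_zero a _ ha (by gcongr)]; simp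
  rw [h1]
  have h2 := intervalIntegral.integral_eq_sub_of_hasDerivAt (a := 0) (b := a)
    (f := fun s => - sg (s ^ 2 / a ^ 2)) (f' := fun s => 2 * π * (s * ka a (s ^ 2))) ?_ ?_
  · rw [h2, sg_zero _ (by field_simp; exact le_rfl), sg_one _ (by simp)]; simp
  · intro s _
    have d1 : HasDerivAt (fun s : ℝ => s ^ 2 / a ^ 2) (2 * s / a ^ 2) s := by
      simpa using (hasDerivAt_pow 2 s).div_const (a ^ 2)
    have d2 : HasDerivAt sg (deriv sg (s ^ 2 / a ^ 2)) (s ^ 2 / a ^ 2) :=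
      ((sg_smooth.differentiable (by simp)).differentiableAt).hasDerivAt
    have := (d2.comp s d1).neg
    refine HasDerivAt.congr_deriv (f := fun s => - sg (s ^ 2 / a ^ 2)) this ?_
    unfold ka mo
    field_simp
  · have := (ka_smooth a).continuous
    exact Continuous.intervalIntegrable (by fun_prop) _ _

lemma exists_h (a b : ℝ) (hb : 0 < b) (hab : b ≤ a) :
    ∃ h : ℝ → ℝ, ContDiff ℝ (⊤ : ℕ∞) h ∧ (∀ q, a ^ 2 ≤ q → h q = 0) ∧
      ∀ q, 4 * (deriv h q + q * deriv (deriv h) q) = ka a q - ka b q := by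
  have ha : 0 < a := hb.trans_le hab
  set N : ℝ → ℝ := fun q => -(1 / (4 * π)) * (sg (q / a ^ 2) - sg (q / b ^ 2)) with hN
  have hNs : ContDiff ℝ (⊤ : ℕ∞) N := by
    have h1 : ContDiff ℝ (⊤ : ℕ∞) (fun q => sg (q / a ^ 2)) := sg_smooth.comp (by fun_prop)
    have h2 : ContDiff ℝ (⊤ : ℕ∞) (fun q => sg (q / b ^ 2)) := sg_smooth.comp (by fun_prop)
    exact contDiff_const.mul (h1.sub h2)
  have hN0 : ∀ q, q < b ^ 2 / 4 → N q = 0 := by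
    intro q hq
    have hq2 : q < a ^ 2 / 4 := hq.trans_le (by gcongr)
    simp only [hN]
    rw [sg_one, sg_one]
    · simp
    · rw [div_le_iff₀ (by positivity)]; linarith
    · rw [div_le_iff₀ (by positivity)]; linarith
  have hN1 : ∀ q, a ^ 2 ≤ q → N q = 0 := by
    intro q hq
    have hq2 : b ^ 2 ≤ q := le_trans (by gcongr) hq
    simp only [hN]
    rw [sg_zero, sg_zero]
    · simp
    · rw [le_div_iff₀ (by positivity)]; linarith
    · rw [le_div_iff₀ (by positivity)]; linarith
  set κ : ℝ → ℝ := fun q => N q / q with hκ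
  have hκs : ContDiff ℝ (⊤ : ℕ∞) κ := by
    rw [contDiff_iff_contDiffAt]
    intro q
    by_cases h : q = 0
    · have : κ =ᶠ[𝓝 q] fun _ => 0 := by
        have : q < b ^ 2 / 4 := by rw [h]; positivity
        filter_upwards [eventually_lt_nhds this] with t ht
        simp [hκ, hN0 t ht]
      exact contDiffAt_const.congr_of_eventuallyEq this
    · exact hNs.contDiffAt.div contDiffAt_id h
  have hmul : ∀ q, q * κ q = N q := by
    intro q
    by_cases h : q = 0
    · rw [h, hN0 0 (by positivity)]; simp
    · simp only [hκ]; field_simp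
  set h : ℝ → ℝ := fun q => ∫ t in (a^2)..q, κ t with hh
  have dh : ∀ q, HasDerivAt h (κ q) q := fun q =>
    intervalIntegral.integral_hasDerivAt_right (hκs.continuous.intervalIntegrable _ _)
      hκs.continuous.stronglyMeasurable.stronglyMeasurableAtFilter hκs.continuous.continuousAt
  have hdh : deriv h = κ := funext fun q => (dh q).deriv
  refine ⟨h, ?_, ?_, ?_⟩
  · rw [contDiff_infty_iff_deriv, hdh]
    exact ⟨fun q => (dh q).differentiableAt, hκs⟩
  · intro q hq
    simp only [hh]
    rw [intervalIntegral.integral_of_le hq]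
    refine setIntegral_eq_zero_of_forall_eq_zero fun t ht => ?_
    simp [hκ, hN1 t ht.1.le]
  · intro q
    rw [hdh]
    have d1 : HasDerivAt κ (deriv κ q) q := ((hκs.differentiable (by simp)).differentiableAt).hasDerivAt
    have d2 := (hasDerivAt_id q).mul d1
    have e : (id * κ) = N := funext hmul
    rw [e] at d2
    have dsg : ∀ c : ℝ, HasDerivAt (fun q => sg (q / c ^ 2)) (deriv sg (q / c ^ 2) * (1 / c ^ 2)) q := by
      intro c
      have d2 : HasDerivAt sg (deriv sg (q / c ^ 2)) (q / c ^ 2) :=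
        ((sg_smooth.differentiable (by simp)).differentiableAt).hasDerivAt
      have d4 : HasDerivAt (sg ∘ fun q => q / c ^ 2) (deriv sg (q / c ^ 2) * (1 / c ^ 2)) q :=
        HasDerivAt.comp (h₂ := sg) q d2 ((hasDerivAt_id q).div_const _)
      exact d4
    have d3 := ((dsg a).sub (dsg b)).const_mul (-(1 / (4 * π)))
    have := d2.unique d3
    simp only [id, one_mul] at this
    rw [this]
    unfold ka mo
    field_simp
    ring

abbrev DS : Set ℂ := ball (0 : ℂ) 1 \ {0}

lemma cball_sub_DS (p : ℂ) (a : ℝ) (h1 : a < ‖p‖) (h2 : a + ‖p‖ < 1) : closedBall p a ⊆ DS := by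
  intro x hx
  rw [mem_closedBall, dist_eq_norm] at hx
  constructor
  · rw [mem_ball_zero_iff]
    have : ‖x‖ ≤ ‖x - p‖ + ‖p‖ := by simpa using norm_add_le (x - p) p
    linarith
  · rintro rfl
    simp at hx
    linarith

lemma int_of_supp (w : ℂ → ℝ) (hw : LocallyIntegrableOn w DS) (K : Set ℂ) (hK : IsCompact K)
    (hKD : K ⊆ DS) (g : ℂ → ℝ) (hg : Continuous g) (hz : ∀ x, x ∉ K → g x = 0) :
    Integrable (fun x => w x * g x) := by
  have h1 : IntegrableOn w K := hw.integrableOn_compact_subset hKD hK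
  have h2 : IntegrableOn (fun x => w x * g x) K := h1.mul_continuousOn hg.continuousOn hK
  have h3 : (fun x => w x * g x) = K.indicator (fun x => w x * g x) := by
    funext x
    by_cases hx : x ∈ K
    · rw [indicator_of_mem hx]
    · rw [indicator_of_notMem hx, hz x hx, mul_zero]
  rw [h3]
  exact (integrable_indicator_iff hK.measurableSet).2 h2

lemma rad_cont (h : ℝ → ℝ) (hh : Continuous h) (p : ℂ) : Continuous (fun x : ℂ => h (‖x - p‖ ^ 2)) := by
  fun_prop

/-- mollified value -/
def Wm (w : ℂ → ℝ) (a : ℝ) (p : ℂ) : ℝ := ∫ x, w x * ka a (‖x - p‖ ^ 2)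

def Weak (w : ℂ → ℝ) : Prop := ∀ (h : ℝ → ℝ) (b : ℝ) (p : ℂ), ContDiff ℝ (⊤ : ℕ∞) h → 0 < b →
  (∀ q, b ^ 2 ≤ q → h q = 0) → b < ‖p‖ → b + ‖p‖ < 1 →
    ∫ x, w x * lap (fun z => h (‖z - p‖ ^ 2)) x = 0

lemma sq_of_notMem {x p : ℂ} {a : ℝ} (ha : 0 < a) (hx : x ∉ closedBall p a) : a ^ 2 ≤ ‖x - p‖ ^ 2 := by
  rw [mem_closedBall, dist_eq_norm, not_le] at hx
  gcongr

lemma Wm_indep0 (w : ℂ → ℝ) (hw : LocallyIntegrableOn w DS) (Hw : Weak w) (a b : ℝ) (p : ℂ)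
    (hb : 0 < b) (hab : b ≤ a) (h1 : a < ‖p‖) (h2 : a + ‖p‖ < 1) : Wm w a p = Wm w b p := by
  obtain ⟨h, hs, hz, he⟩ := exists_h a b hb hab
  have ha : 0 < a := hb.trans_le hab
  have := Hw h a p hs ha hz h1 h2
  simp_rw [lap_radial h hs p, he] at this
  unfold Wm
  rw [← sub_eq_zero, ← integral_sub]
  · rw [← this]; congr 1; funext x; ring
  · exact int_of_supp w hw _ (isCompact_closedBall p a) (cball_sub_DS p a h1 h2) _
      (rad_cont _ (ka_smooth a).continuous p) (fun x hx => ka_zero a _ ha (sq_of_notMem ha hx))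
  · exact int_of_supp w hw _ (isCompact_closedBall p b) (cball_sub_DS p b (by linarith) (by linarith)) _
      (rad_cont _ (ka_smooth b).continuous p) (fun x hx => ka_zero b _ hb (sq_of_notMem hb hx))

lemma Wm_indep (w : ℂ → ℝ) (hw : LocallyIntegrableOn w DS) (Hw : Weak w) (a b : ℝ) (p : ℂ)
    (ha : 0 < a) (hb : 0 < b) (h1 : a < ‖p‖) (h2 : a + ‖p‖ < 1) (h1' : b < ‖p‖) (h2' : b + ‖p‖ < 1) :
    Wm w a p = Wm w b p := by
  rcases le_total b a with h | h
  · exact Wm_indep0 w hw Hw a b p hb h h1 h2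
  · exact (Wm_indep0 w hw Hw b a p ha h h1' h2').symm

def WW (w : ℂ → ℝ) (p : ℂ) : ℝ := Wm w (‖p‖ / 4) p

def cv (f ρ : ℂ → ℝ) (p : ℂ) : ℝ := ∫ t, f t * ρ (p - t)

lemma cv_eq (f ρ : ℂ → ℝ) : cv f ρ = convolution f ρ (ContinuousLinearMap.lsmul ℝ ℝ) volume := by
  funext p
  simp [cv, convolution_def]

lemma cv_smooth (f ρ : ℂ → ℝ) (hf : Integrable f) (hρ : ContDiff ℝ (⊤ : ℕ∞) ρ)
    (hc : HasCompactSupport ρ) : ContDiff ℝ (⊤ : ℕ∞) (cv f ρ) := by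
  rw [cv_eq]
  exact hc.contDiff_convolution_right _ hf.locallyIntegrable hρ

lemma cv_fderiv (f ρ : ℂ → ℝ) (hf : Integrable f) (hρ : ContDiff ℝ (⊤ : ℕ∞) ρ)
    (hc : HasCompactSupport ρ) (p e : ℂ) : fderiv ℝ (cv f ρ) p e = cv f (fun x => fderiv ℝ ρ x e) p := by
  have h1 : ContDiff ℝ 1 ρ := hρ.of_le (by exact_mod_cast le_top)
  have := hc.hasFDerivAt_convolution_right (ContinuousLinearMap.lsmul ℝ ℝ) hf.locallyIntegrable h1 p
  rw [cv_eq, this.fderiv, convolution_precompR_apply _ hf.locallyIntegrable (hc.fderiv ℝ) (h1.continuous_fderiv (by simp)), cv_eq]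

lemma fderiv_smooth (ρ : ℂ → ℝ) (hρ : ContDiff ℝ (⊤ : ℕ∞) ρ) (e : ℂ) : ContDiff ℝ (⊤ : ℕ∞) (fun x => fderiv ℝ ρ x e) := by
  have := (contDiff_infty_iff_fderiv.1 hρ).2
  exact this.clm_apply contDiff_const

lemma fderiv_cs (ρ : ℂ → ℝ) (hc : HasCompactSupport ρ) (e : ℂ) : HasCompactSupport (fun x => fderiv ℝ ρ x e) := by
  exact hc.fderiv_apply ℝ e

lemma cv_lap (f ρ : ℂ → ℝ) (hf : Integrable f) (hρ : ContDiff ℝ (⊤ : ℕ∞) ρ)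
    (hc : HasCompactSupport ρ) (p : ℂ) : lap (cv f ρ) p = cv f (lap ρ) p := by
  have h1 : ∀ e, (fun w => fderiv ℝ (cv f ρ) w e) = cv f (fun x => fderiv ℝ ρ x e) := fun e =>
    funext fun p => cv_fderiv f ρ hf hρ hc p e
  have hi : ∀ e, Integrable (fun t => f t * fderiv ℝ (fun x => fderiv ℝ ρ x e) (p - t) e) := by
    intro e
    have c := (fderiv_smooth _ (fderiv_smooth ρ hρ e) e).continuous
    have c2 := fderiv_cs _ (fderiv_cs ρ hc e) e
    obtain ⟨C, hC⟩ := c2.exists_bound_of_continuous c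
    refine hf.mul_bdd (c := C) ?_ ?_
    · exact (c.comp (by fun_prop : Continuous fun t : ℂ => p - t)).aestronglyMeasurable
    · exact Eventually.of_forall fun t => hC _
  unfold lap
  rw [h1, h1, cv_fderiv _ _ hf (fderiv_smooth ρ hρ _) (fderiv_cs ρ hc _),
    cv_fderiv _ _ hf (fderiv_smooth ρ hρ _) (fderiv_cs ρ hc _)]
  unfold cv
  rw [← integral_add (hi _) (hi _)]
  congr 1; funext t; ring

def rho (a : ℝ) (x : ℂ) : ℝ := ka a (‖x - 0‖ ^ 2)
lemma rho_smooth (a : ℝ) : ContDiff ℝ (⊤ : ℕ∞) (rho a) := by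
  unfold rho
  have h1 : ContDiff ℝ (⊤ : ℕ∞) (fun x : ℂ => ‖x - 0‖ ^ 2) := (contDiff_id.sub contDiff_const).norm_sq ℝ
  exact (ka_smooth a).comp h1
lemma rho_cs (a : ℝ) (ha : 0 < a) : HasCompactSupport (rho a) := by
  refine HasCompactSupport.intro (isCompact_closedBall (0:ℂ) a) fun x hx => ka_zero a _ ha (sq_of_notMem ha hx)

lemma WW_local (w : ℂ → ℝ) (hw : LocallyIntegrableOn w DS) (Hw : Weak w) (p0 : ℂ) (h0 : 0 < ‖p0‖)
    (h0' : ‖p0‖ < 1 / 2) (p : ℂ) (hp : p ∈ ball p0 (‖p0‖ / 4)) :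
    WW w p = cv ((closedBall p0 (‖p0‖ / 2)).indicator w) (rho (‖p0‖ / 4)) p ∧
    lap (cv ((closedBall p0 (‖p0‖ / 2)).indicator w) (rho (‖p0‖ / 4))) p = 0 := by
  set a := ‖p0‖ / 4 with ha
  have ha0 : 0 < a := by positivity
  have hn : ‖p0‖ = 4 * a := by rw [ha]; ring
  rw [mem_ball, dist_eq_norm] at hp
  have e1 : ‖p‖ ≤ 5 * a := by
    have : ‖p‖ ≤ ‖p - p0‖ + ‖p0‖ := by simpa using norm_add_le (p - p0) p0
    linarith
  have e2 : 3 * a < ‖p‖ := by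
    have := norm_sub_norm_le p0 p
    rw [norm_sub_rev] at this
    linarith
  have hsub : closedBall p a ⊆ closedBall p0 (‖p0‖ / 2) := by
    apply closedBall_subset_closedBall'
    rw [dist_eq_norm]; linarith
  have key : ∀ g : ℂ → ℝ, (∀ x, x ∉ closedBall p a → g x = 0) → ∀ x,
      (closedBall p0 (‖p0‖ / 2)).indicator w x * g x = w x * g x := by
    intro g hg x
    by_cases hx : x ∈ closedBall p a
    · rw [indicator_of_mem (hsub hx)]
    · rw [hg x hx]; simp
  have hf : Integrable ((closedBall p0 (‖p0‖ / 2)).indicator w) := by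
    rw [integrable_indicator_iff measurableSet_closedBall]
    exact hw.integrableOn_compact_subset (cball_sub_DS _ _ (by linarith) (by linarith)) (isCompact_closedBall _ _)
  constructor
  · have : WW w p = Wm w a p := Wm_indep w hw Hw _ _ p (by linarith) ha0 (by linarith) (by linarith) (by linarith) (by linarith)
    rw [this]
    unfold Wm cv
    congr 1; funext x
    rw [← key (fun x => ka a (‖x - p‖ ^ 2)) (fun x hx => ka_zero a _ ha0 (sq_of_notMem ha0 hx)) x]
    simp only [rho, sub_zero, norm_sub_rev x p]
  · rw [cv_lap _ _ hf (rho_smooth a) (rho_cs a ha0)]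
    have := Hw (ka a) a p (ka_smooth a) ha0 (fun q hq => ka_zero a q ha0 hq) (by linarith) (by linarith)
    rw [← this]
    unfold cv
    congr 1; funext x
    have e : lap (rho a) (p - x) = lap (fun z => ka a (‖z - p‖ ^ 2)) x := by
      unfold rho
      rw [lap_radial _ (ka_smooth a), lap_radial _ (ka_smooth a), sub_zero, norm_sub_rev p x]
    rw [e]
    refine key (lap (fun z => ka a (‖z - p‖ ^ 2))) (fun x hx => ?_) x
    have hev : (fun z => ka a (‖z - p‖ ^ 2)) =ᶠ[𝓝 x] fun _ => 0 := by
      filter_upwards [isClosed_closedBall.isOpen_compl.mem_nhds hx] with z hz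
      exact ka_zero a _ ha0 (sq_of_notMem ha0 hz)
    unfold lap
    have hev1 : ∀ e : ℂ, (fun z => fderiv ℝ (fun z => ka a (‖z - p‖ ^ 2)) z e) =ᶠ[𝓝 x] fun _ => 0 := by
      intro e
      filter_upwards [hev.eventually_nhds] with z hz
      rw [Filter.EventuallyEq.fderiv_eq hz]; simp
    rw [(hev1 _).fderiv_eq, (hev1 _).fderiv_eq]; simp

lemma dka_bdd : ∃ C : ℝ, 0 ≤ C ∧ ∀ a : ℝ, 0 < a → ∀ x e : ℂ, ‖e‖ ≤ 1 →
    |fderiv ℝ (rho a) x e| ≤ (closedBall (0:ℂ) a).indicator (fun _ => C * (a ^ 3)⁻¹) x := by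
  obtain ⟨C, hC, h1, h2⟩ := mo_bdd
  refine ⟨4 * C, by positivity, fun a ha x e he => ?_⟩
  by_cases hx : x ∈ closedBall (0:ℂ) a
  · rw [indicator_of_mem hx]
    unfold rho
    rw [hasFDerivAt_radial _ (ka_smooth a)]
    rw [mem_closedBall_zero_iff] at hx
    have d : deriv (ka a) (‖x - 0‖ ^ 2) = (a ^ 2)⁻¹ * (deriv mo (‖x - 0‖ ^ 2 / a ^ 2) * (1 / a ^ 2)) := by
      have d2 : HasDerivAt mo (deriv mo (‖x - 0‖ ^ 2 / a ^ 2)) (‖x - 0‖ ^ 2 / a ^ 2) :=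
        ((mo_smooth.differentiable (by simp)).differentiableAt).hasDerivAt
      have d4 := HasDerivAt.comp (h₂ := mo) (‖x - 0‖ ^ 2) d2 ((hasDerivAt_id (‖x - 0‖ ^ 2)).div_const (a ^ 2))
      exact (d4.const_mul ((a ^ 2)⁻¹)).deriv
    rw [d]
    have b1 := h2 (‖x - 0‖ ^ 2 / a ^ 2) (by positivity)
    have b2 : |2 * ((x - 0).re * e.re + (x - 0).im * e.im)| ≤ 4 * a := by
      rw [sub_zero]
      have r1 := (Complex.abs_re_le_norm x).trans hx
      have r2 := (Complex.abs_im_le_norm x).trans hx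
      have r3 := (Complex.abs_re_le_norm e).trans he
      have r4 := (Complex.abs_im_le_norm e).trans he
      have m1 : |x.re * e.re| ≤ a * 1 := by rw [abs_mul]; gcongr
      have m2 : |x.im * e.im| ≤ a * 1 := by rw [abs_mul]; gcongr
      rw [abs_mul, abs_two]
      have := abs_add_le (x.re * e.re) (x.im * e.im)
      linarith
    rw [abs_mul, abs_mul, abs_mul, abs_of_pos (by positivity : 0 < (a ^ 2)⁻¹), abs_of_pos (by positivity : 0 < 1 / a ^ 2)]
    calc (a ^ 2)⁻¹ * (|deriv mo (‖x - 0‖ ^ 2 / a ^ 2)| * (1 / a ^ 2)) * |2 * ((x - 0).re * e.re + (x - 0).im * e.im)|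
        ≤ (a ^ 2)⁻¹ * (C * (1 / a ^ 2)) * (4 * a) := by gcongr
      _ = 4 * C * (a ^ 3)⁻¹ := by field_simp
  · rw [indicator_of_notMem hx]
    have hev : rho a =ᶠ[𝓝 x] fun _ => 0 := by
      filter_upwards [isClosed_closedBall.isOpen_compl.mem_nhds hx] with z hz
      exact ka_zero a _ ha (sq_of_notMem ha hz)
    rw [hev.fderiv_eq]; simp

lemma WW_grad : ∃ C : ℝ, 0 ≤ C ∧ ∀ (w : ℂ → ℝ), LocallyIntegrableOn w DS → Weak w →
    ∀ p : ℂ, 0 < ‖p‖ → ‖p‖ < 1 / 2 → ∀ e : ℂ, ‖e‖ ≤ 1 →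
      |fderiv ℝ (WW w) p e| ≤ C * (‖p‖ ^ 3)⁻¹ * ∫ x in closedBall p (‖p‖ / 4), |w x| := by
  obtain ⟨C, hC, h⟩ := dka_bdd
  refine ⟨C * 64, by positivity, fun w hw Hw p h0 h0' e he => ?_⟩
  have hf : Integrable ((closedBall p (‖p‖ / 2)).indicator w) := by
    rw [integrable_indicator_iff measurableSet_closedBall]
    exact hw.integrableOn_compact_subset (cball_sub_DS _ _ (by linarith) (by linarith)) (isCompact_closedBall _ _)
  have hf2 : IntegrableOn w (closedBall p (‖p‖ / 4)) := 
    hw.integrableOn_compact_subset (cball_sub_DS _ _ (by linarith) (by linarith)) (isCompact_closedBall _ _)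
  have hev : WW w =ᶠ[𝓝 p] cv ((closedBall p (‖p‖ / 2)).indicator w) (rho (‖p‖ / 4)) := by
    filter_upwards [ball_mem_nhds p (by positivity : 0 < ‖p‖ / 4)] with q hq
    exact (WW_local w hw Hw p h0 h0' q hq).1
  rw [hev.fderiv_eq, cv_fderiv _ _ hf (rho_smooth _) (rho_cs _ (by positivity))]
  unfold cv
  have h3 : ∫ x, (closedBall p (‖p‖ / 4)).indicator (fun x => C * ((‖p‖ / 4) ^ 3)⁻¹ * |w x|) x
     = C * 64 * (‖p‖ ^ 3)⁻¹ * ∫ x in closedBall p (‖p‖ / 4), |w x| := by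
    rw [integral_indicator measurableSet_closedBall, integral_const_mul]
    congr 1; field_simp; ring
  rw [← h3, ← Real.norm_eq_abs]
  refine norm_integral_le_of_norm_le ?_ (Eventually.of_forall fun t => ?_)
  · rw [integrable_indicator_iff measurableSet_closedBall]
    exact hf2.abs.const_mul _
  · have b := h (‖p‖ / 4) (by positivity) (p - t) e he
    rw [norm_mul, Real.norm_eq_abs, Real.norm_eq_abs]
    have hiff : p - t ∈ closedBall (0:ℂ) (‖p‖ / 4) ↔ t ∈ closedBall p (‖p‖ / 4) := by
      rw [mem_closedBall_zero_iff, mem_closedBall, dist_eq_norm, norm_sub_rev]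
    by_cases ht : t ∈ closedBall p (‖p‖ / 4)
    · rw [indicator_of_mem ht, indicator_of_mem (closedBall_subset_closedBall (by linarith) ht)]
      rw [indicator_of_mem (hiff.2 ht)] at b
      rw [mul_comm]; gcongr
    · rw [indicator_of_notMem ht]
      rw [indicator_of_notMem (by rwa [hiff])] at b
      have : |fderiv ℝ (rho (‖p‖ / 4)) (p - t) e| = 0 := le_antisymm b (abs_nonneg _)
      rw [this, mul_zero]

lemma WW_harm (w : ℂ → ℝ) (hw : LocallyIntegrableOn w DS) (Hw : Weak w) (p : ℂ) (h0 : 0 < ‖p‖)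
    (h0' : ‖p‖ < 1 / 2) : InnerProductSpace.HarmonicAt (WW w) p := by
  have hf : Integrable ((closedBall p (‖p‖ / 2)).indicator w) := by
    rw [integrable_indicator_iff measurableSet_closedBall]
    exact hw.integrableOn_compact_subset (cball_sub_DS _ _ (by linarith) (by linarith)) (isCompact_closedBall _ _)
  have hev : WW w =ᶠ[𝓝 p] cv ((closedBall p (‖p‖ / 2)).indicator w) (rho (‖p‖ / 4)) := by
    filter_upwards [ball_mem_nhds p (by positivity : 0 < ‖p‖ / 4)] with q hq
    exact (WW_local w hw Hw p h0 h0' q hq).1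
  rw [InnerProductSpace.harmonicAt_congr_nhds hev]
  have hs := cv_smooth _ _ hf (rho_smooth (‖p‖ / 4)) (rho_cs _ (by positivity))
  refine ⟨(contDiff_infty.1 hs 2).contDiffAt, ?_⟩
  filter_upwards [ball_mem_nhds p (by positivity : 0 < ‖p‖ / 4)] with q hq
  have hl := (WW_local w hw Hw p h0 h0' q hq).2
  rw [InnerProductSpace.laplacian_eq_iteratedFDeriv_complexPlane]
  simp only [iteratedFDeriv_two_apply, Pi.zero_apply]
  unfold lap at hl
  set V := cv ((closedBall p (‖p‖ / 2)).indicator w) (rho (‖p‖ / 4))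
  have hd : DifferentiableAt ℝ (fderiv ℝ V) q :=
    ((contDiff_infty_iff_fderiv.1 hs).2.differentiable (by simp)).differentiableAt
  have he : ∀ e : ℂ, fderiv ℝ (fun w => fderiv ℝ V w e) q e = fderiv ℝ (fderiv ℝ V) q e e := by
    intro e
    rw [fderiv_clm_apply hd (by fun_prop)]
    simp
  rw [he, he] at hl
  simpa using hl

lemma WW_ae_local (w : ℂ → ℝ) (hw : LocallyIntegrableOn w DS) (Hw : Weak w) (p0 : ℂ) (h0 : 0 < ‖p0‖)
    (h0' : ‖p0‖ < 1 / 2) : ∀ᵐ p, p ∈ ball p0 (‖p0‖ / 4) → w p = WW w p := by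
  have hf : Integrable ((closedBall p0 (‖p0‖ / 2)).indicator w) := by
    rw [integrable_indicator_iff measurableSet_closedBall]
    exact hw.integrableOn_compact_subset (cball_sub_DS _ _ (by linarith) (by linarith)) (isCompact_closedBall _ _)
  obtain ⟨C, hC, hb, -⟩ := mo_bdd
  filter_upwards [(Besicovitch.vitaliFamily volume).ae_tendsto_average_norm_sub hf.locallyIntegrable] with p hp hpb
  have h1 := hp.comp (Besicovitch.tendsto_filterAt volume p)
  set a := ‖p0‖ / 4 with ha
  have ha0 : 0 < a := by positivity
  have hn : ‖p0‖ = 4 * a := by rw [ha]; ring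
  rw [mem_ball, dist_eq_norm] at hpb
  have e1 : ‖p‖ ≤ 5 * a := by
    have : ‖p‖ ≤ ‖p - p0‖ + ‖p0‖ := by simpa using norm_add_le (p - p0) p0
    linarith
  have e2 : 3 * a < ‖p‖ := by
    have := norm_sub_norm_le p0 p
    rw [norm_sub_rev] at this
    linarith
  set f := (closedBall p0 (‖p0‖ / 2)).indicator w with hfd
  have hsub : closedBall p a ⊆ closedBall p0 (‖p0‖ / 2) := by
    apply closedBall_subset_closedBall'
    rw [dist_eq_norm]; linarith
  have h2 : ∀ᶠ δ in 𝓝[>] (0:ℝ), |w p - WW w p| ≤ C * π * (⨍ y in closedBall p δ, ‖f y - f p‖) := by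
    filter_upwards [Ioo_mem_nhdsGT ha0] with δ hδ
    obtain ⟨hδ0, hδa⟩ := hδ
    have i1 : Integrable (fun x => ka δ (‖x - p‖ ^ 2)) := by
      refine (rad_cont _ (ka_smooth δ).continuous p).integrable_of_hasCompactSupport ?_
      exact HasCompactSupport.intro (isCompact_closedBall p δ) fun x hx => ka_zero δ _ hδ0 (sq_of_notMem hδ0 hx)
    have E1 : WW w p = Wm w δ p := Wm_indep w hw Hw _ _ p (by linarith) hδ0 (by linarith) (by linarith) (by linarith) (by linarith)
    have i2 := int_of_supp w hw _ (isCompact_closedBall p δ) (cball_sub_DS p δ (by linarith) (by linarith)) _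
      (rad_cont _ (ka_smooth δ).continuous p) (fun x hx => ka_zero δ _ hδ0 (sq_of_notMem hδ0 hx))
    have hsub2 : closedBall p δ ⊆ closedBall p a := closedBall_subset_closedBall hδa.le
    have fp : f p = w p := indicator_of_mem (hsub (mem_closedBall_self ha0.le)) _
    have E2 : WW w p - w p = ∫ x, (w x - w p) * ka δ (‖x - p‖ ^ 2) := by
      simp_rw [sub_mul]
      rw [integral_sub i2 (i1.const_mul _), integral_const_mul, ka_integral δ hδ0 p, mul_one, E1]
      rfl
    rw [abs_sub_comm, E2, setAverage_eq, smul_eq_mul]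
    have hv : volume.real (closedBall p δ) = π * δ ^ 2 := by
      rw [Measure.real, Measure.addHaar_closedBall_eq_addHaar_ball, volume_ball_complex p δ hδ0.le,
        ENNReal.toReal_ofReal (by positivity)]
    rw [hv]
    have hi : IntegrableOn (fun y => ‖f y - f p‖) (closedBall p δ) := by
      refine ((hf.integrableOn (s := closedBall p δ)).sub ?_).norm
      exact integrableOn_const (measure_closedBall_lt_top.ne)
    have E3 : C * π * ((π * δ ^ 2)⁻¹ * ∫ y in closedBall p δ, ‖f y - f p‖) =
       ∫ y, (closedBall p δ).indicator (fun y => C * (δ ^ 2)⁻¹ * ‖f y - f p‖) y := by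
      rw [integral_indicator measurableSet_closedBall, integral_const_mul]
      field_simp
    rw [E3, ← Real.norm_eq_abs]
    refine norm_integral_le_of_norm_le ?_ (Eventually.of_forall fun t => ?_)
    · rw [integrable_indicator_iff measurableSet_closedBall]
      exact hi.const_mul _
    · by_cases ht : t ∈ closedBall p δ
      · rw [indicator_of_mem ht, norm_mul, fp]
        have : f t = w t := indicator_of_mem (hsub (hsub2 ht)) _
        rw [this, mul_comm]
        gcongr
        unfold ka
        rw [norm_mul, Real.norm_eq_abs, Real.norm_eq_abs, abs_of_pos (by positivity : 0 < (δ ^ 2)⁻¹), mul_comm]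
        gcongr
        exact hb _ (by positivity)
      · rw [indicator_of_notMem ht, ka_zero δ _ hδ0 (sq_of_notMem hδ0 ht)]; simp
  have h3 : Tendsto (fun δ => C * π * (⨍ y in closedBall p δ, ‖f y - f p‖)) (𝓝[>] (0:ℝ)) (𝓝 (C * π * 0)) :=
    h1.const_mul _
  rw [mul_zero] at h3
  have h4 := ge_of_tendsto h3 h2
  exact sub_eq_zero.1 (abs_eq_zero.1 (le_antisymm h4 (abs_nonneg _)))

lemma WW_ae (w : ℂ → ℝ) (hw : LocallyIntegrableOn w DS) (Hw : Weak w) :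
    ∀ᵐ p : ℂ, 0 < ‖p‖ → ‖p‖ < 1 / 2 → w p = WW w p := by
  rw [ae_iff]
  apply measure_null_of_locally_null
  intro p hp
  simp only [mem_ofPred_eq, not_forall] at hp
  obtain ⟨h0, h0', -⟩ := hp
  have := WW_ae_local w hw Hw p h0 h0'
  rw [ae_iff] at this
  refine ⟨_, ?_, this⟩
  rw [mem_nhdsWithin]
  refine ⟨ball p (‖p‖ / 4), isOpen_ball, mem_ball_self (by positivity), ?_⟩
  rintro q ⟨hq1, hq2⟩
  simp only [mem_ofPred_eq, not_forall] at hq2 ⊢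
  obtain ⟨_, _, h⟩ := hq2
  exact ⟨hq1, h⟩

/-- the holomorphic function `z (W_x - i W_y)` -/
def QQ (W : ℂ → ℝ) (z : ℂ) : ℂ := z * ((fderiv ℝ W z 1 : ℂ) - Complex.I * (fderiv ℝ W z Complex.I : ℂ))

lemma clm_lin (T : ℂ →L[ℝ] ℝ) (z : ℂ) : T z = z.re * T 1 + z.im * T Complex.I := by
  conv_lhs => rw [show z = z.re • (1:ℂ) + z.im • Complex.I by simp]
  rw [map_add, map_smul, map_smul]; rfl

lemma QQ_re (W : ℂ → ℝ) (z : ℂ) : (QQ W z).re = fderiv ℝ W z z := by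
  have : fderiv ℝ W z z = z.re * fderiv ℝ W z 1 + z.im * fderiv ℝ W z Complex.I := by
    exact clm_lin _ z
  rw [this]
  simp [QQ]
lemma QQ_diff (W : ℂ → ℝ) (z : ℂ) (h : InnerProductSpace.HarmonicAt W z) : DifferentiableAt ℂ (QQ W) z :=
  differentiableAt_id.mul (HarmonicAt.differentiableAt_complex_partial h)

lemma per_int {E : Type*} [NormedAddCommGroup E] [NormedSpace ℝ E] (g : ℂ → E) (s : ℝ) :
    ∫ θ in (0:ℝ)..(2 * π), g ((s : ℂ) * Complex.exp (θ * Complex.I)) =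
    ∫ θ in (-π)..π, g ((s : ℂ) * Complex.exp (θ * Complex.I)) := by
  have hp : Function.Periodic (fun θ : ℝ => g ((s : ℂ) * Complex.exp (θ * Complex.I))) (2 * π) := by
    intro θ
    simp only
    congr 2
    push_cast
    rw [add_mul]
    exact Complex.exp_periodic _
  have := hp.intervalIntegral_add_eq 0 (-π)
  rw [zero_add] at this
  rw [this]; congr 1; ring

def Harm (W : ℂ → ℝ) : Prop := ∀ z : ℂ, 0 < ‖z‖ → ‖z‖ < 1 / 2 → InnerProductSpace.HarmonicAt W z

lemma Q_circ (W : ℂ → ℝ) (hW : Harm W) (r R : ℝ) (hr : 0 < r) (hR : r ≤ R) (hR2 : R < 1 / 2) :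
    ∫ θ in (-π)..π, QQ W ((R : ℂ) * Complex.exp (θ * Complex.I)) =
    ∫ θ in (-π)..π, QQ W ((r : ℂ) * Complex.exp (θ * Complex.I)) := by
  have hd : ∀ z : ℂ, 0 < ‖z‖ → ‖z‖ < 1 / 2 → DifferentiableAt ℂ (fun z => z⁻¹ * QQ W z) z := by
    intro z h1 h2
    exact (differentiableAt_inv (norm_pos_iff.1 h1)).mul (QQ_diff W z (hW z h1 h2))
  have h := Complex.circleIntegral_eq_of_differentiable_on_annulus_off_countable (c := 0) hr hR
    (f := fun z => z⁻¹ * QQ W z) (s := ∅) countable_empty ?_ ?_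
  · have e : ∀ s : ℝ, 0 < s → (∮ z in C(0, s), z⁻¹ * QQ W z) = Complex.I * ∫ θ in (-π)..π, QQ W ((s : ℂ) * Complex.exp (θ * Complex.I)) := by
      intro s hs
      rw [← per_int (QQ W) s]
      unfold circleIntegral
      rw [← intervalIntegral.integral_const_mul]
      congr 1; funext θ
      have hne : circleMap 0 s θ ≠ 0 := circleMap_ne_center hs.ne'
      rw [deriv_circleMap, smul_eq_mul]
      have : (s : ℂ) * Complex.exp (θ * Complex.I) = circleMap 0 s θ := by simp [circleMap]
      rw [this]
      field_simp
    rw [e R (by linarith), e r hr] at h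
    exact mul_left_cancel₀ Complex.I_ne_zero h
  · rintro z ⟨h1, h2⟩
    simp at h1 h2
    exact (hd z (by linarith) (by linarith)).continuousAt.continuousWithinAt
  · rintro z ⟨⟨h1, h2⟩, -⟩
    simp at h1 h2
    exact hd z (by linarith) (by linarith)

lemma Harm.diffAt {W : ℂ → ℝ} (hW : Harm W) (z : ℂ) (h1 : 0 < ‖z‖) (h2 : ‖z‖ < 1 / 2) : DifferentiableAt ℝ W z :=
  (hW z h1 h2).1.differentiableAt (by simp)

lemma Harm.contOn {W : ℂ → ℝ} (hW : Harm W) : ContinuousOn W {z | 0 < ‖z‖ ∧ ‖z‖ < 1 / 2} :=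
  fun z hz => (hW.diffAt z hz.1 hz.2).continuousAt.continuousWithinAt

lemma Harm.QcontOn {W : ℂ → ℝ} (hW : Harm W) : ContinuousOn (QQ W) {z | 0 < ‖z‖ ∧ ‖z‖ < 1 / 2} :=
  fun z hz => (QQ_diff W z (hW z hz.1 hz.2)).continuousAt.continuousWithinAt

lemma cont_circ {E : Type*} [TopologicalSpace E] {g : ℂ → E} (hg : ContinuousOn g {z | 0 < ‖z‖ ∧ ‖z‖ < 1 / 2}) :
    ContinuousOn (fun x : ℝ × ℝ => g ((x.1 : ℂ) * Complex.exp (x.2 * Complex.I))) (Ioo 0 (1/2) ×ˢ univ) := by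
  refine hg.comp (Continuous.continuousOn (by fun_prop)) ?_
  rintro ⟨s, θ⟩ ⟨⟨h1, h2⟩, -⟩
  simp only [mem_ofPred_eq, norm_polar]
  simp only at h1 h2
  rw [abs_of_pos h1]; exact ⟨h1, h2⟩

lemma cont_circ1 {E : Type*} [TopologicalSpace E] {g : ℂ → E} (hg : ContinuousOn g {z | 0 < ‖z‖ ∧ ‖z‖ < 1 / 2})
    (s : ℝ) (h1 : 0 < s) (h2 : s < 1 / 2) :
    Continuous (fun θ : ℝ => g ((s : ℂ) * Complex.exp (θ * Complex.I))) := by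
  have := (cont_circ hg).comp_continuous (f := fun θ : ℝ => (s, θ)) (by fun_prop) (fun θ => ⟨⟨h1, h2⟩, trivial⟩)
  exact this

lemma mean_log (W : ℂ → ℝ) (hW : Harm W) : ∃ A B : ℝ, ∀ s : ℝ, 0 < s → s < 1 / 2 →
    ((∫ θ in (-π)..π, (QQ W ((s : ℂ) * Complex.exp (θ * Complex.I))).re) = 2 * π * A ∧
    (∫ θ in (-π)..π, W ((s : ℂ) * Complex.exp (θ * Complex.I))) = 2 * π * (A * log s + B)) := by
  have hQre : ContinuousOn (fun z => (QQ W z).re) {z | 0 < ‖z‖ ∧ ‖z‖ < 1 / 2} :=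
    Complex.continuous_re.comp_continuousOn hW.QcontOn
  have hre : ∀ s : ℝ, 0 < s → s < 1 / 2 → (∫ θ in (-π)..π, (QQ W ((s : ℂ) * Complex.exp (θ * Complex.I))).re)
      = (∫ θ in (-π)..π, QQ W ((s : ℂ) * Complex.exp (θ * Complex.I))).re := by
    intro s h1 h2
    have := Complex.reCLM.intervalIntegral_comp_comm (μ := volume) ((cont_circ1 hW.QcontOn s h1 h2).intervalIntegrable (-π) π)
    simpa using this
  set A := (∫ θ in (-π)..π, QQ W (((1/4 : ℝ) : ℂ) * Complex.exp (θ * Complex.I))).re / (2 * π) with hA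
  set B := (∫ θ in (-π)..π, W (((1/4 : ℝ) : ℂ) * Complex.exp (θ * Complex.I))) / (2 * π) - A * log (1/4) with hB
  have hQ : ∀ s : ℝ, 0 < s → s < 1 / 2 → (∫ θ in (-π)..π, (QQ W ((s : ℂ) * Complex.exp (θ * Complex.I))).re) = 2 * π * A := by
    intro s h1 h2
    rw [hre s h1 h2, hA]
    rcases le_total s (1/4) with h | h
    · rw [Q_circ W hW s (1/4) h1 h (by norm_num), mul_div_cancel₀ _ (by positivity)]
    · rw [Q_circ W hW (1/4) s (by norm_num) h h2, mul_div_cancel₀ _ (by positivity)]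
  refine ⟨A, B, fun s h1 h2 => ⟨hQ s h1 h2, ?_⟩⟩
  have hsub : uIcc (1/4 : ℝ) s ⊆ Ioo 0 (1/2) := by
    intro t ht
    rw [mem_uIcc] at ht
    rcases ht with ht | ht <;> constructor <;> linarith [ht.1, ht.2]
  have ftc : ∀ θ : ℝ, W ((s : ℂ) * Complex.exp (θ * Complex.I)) - W (((1/4 : ℝ) : ℂ) * Complex.exp (θ * Complex.I))
      = ∫ t in (1/4 : ℝ)..s, t⁻¹ * (QQ W ((t : ℂ) * Complex.exp (θ * Complex.I))).re := by
    intro θ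
    rw [eq_comm]
    refine intervalIntegral.integral_eq_sub_of_hasDerivAt (f := fun t : ℝ => W ((t : ℂ) * Complex.exp (θ * Complex.I))) ?_ ?_
    · intro t ht
      obtain ⟨ht0, ht1⟩ := hsub ht
      have hn : ‖(t : ℂ) * Complex.exp (θ * Complex.I)‖ = t := by rw [norm_polar, abs_of_pos ht0]
      have d1 := (hW.diffAt ((t : ℂ) * Complex.exp (θ * Complex.I)) (by rw [hn]; exact ht0) (by rw [hn]; exact ht1)).hasFDerivAt
      have d2 : HasDerivAt (fun t : ℝ => (t : ℂ) * Complex.exp (θ * Complex.I)) (Complex.exp (θ * Complex.I)) t := by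
        simpa using (Complex.ofRealCLM.hasDerivAt (x := t)).mul_const (Complex.exp (θ * Complex.I))
      have d3 := d1.comp_hasDerivAt t d2
      refine d3.congr_deriv ?_
      rw [QQ_re]
      have : (t : ℂ) * Complex.exp (θ * Complex.I) = t • Complex.exp (θ * Complex.I) := by simp
      conv_rhs => enter [2, 2]; rw [this]
      rw [map_smul, smul_eq_mul, ← mul_assoc, inv_mul_cancel₀ ht0.ne', one_mul]
    · refine ContinuousOn.intervalIntegrable ?_
      refine ContinuousOn.mul (continuousOn_inv₀.mono fun t ht => (hsub ht).1.ne') ?_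
      exact (cont_circ hQre).comp (f := fun t : ℝ => (t, θ)) (by fun_prop) (fun t ht => ⟨hsub ht, trivial⟩)
  have i1 : ∀ s : ℝ, 0 < s → s < 1 / 2 → IntervalIntegrable (fun θ : ℝ => W ((s : ℂ) * Complex.exp (θ * Complex.I))) volume (-π) π :=
    fun s h1 h2 => (cont_circ1 hW.contOn s h1 h2).intervalIntegrable _ _
  have key : (∫ θ in (-π)..π, W ((s : ℂ) * Complex.exp (θ * Complex.I))) - (∫ θ in (-π)..π, W (((1/4 : ℝ) : ℂ) * Complex.exp (θ * Complex.I)))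
      = 2 * π * A * (log s - log (1/4)) := by
    rw [← intervalIntegral.integral_sub (i1 s h1 h2) (i1 _ (by norm_num) (by norm_num))]
    simp_rw [ftc]
    rw [intervalIntegral_intervalIntegral_swap]
    · have e : ∀ t ∈ uIcc (1/4 : ℝ) s, (∫ θ in (-π)..π, t⁻¹ * (QQ W ((t : ℂ) * Complex.exp (θ * Complex.I))).re) = 2 * π * A * t⁻¹ := by
        intro t ht
        rw [intervalIntegral.integral_const_mul, hQ t (hsub ht).1 (hsub ht).2]; ring
      rw [intervalIntegral.integral_congr e, intervalIntegral.integral_const_mul, integral_inv_of_pos (by norm_num) h1,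
        Real.log_div h1.ne' (by norm_num)]
    · have : ContinuousOn (fun x : ℝ × ℝ => x.2⁻¹ * (QQ W ((x.2 : ℂ) * Complex.exp (x.1 * Complex.I))).re) (uIcc (-π) π ×ˢ uIcc (1/4) s) := by
        refine ContinuousOn.mul (ContinuousOn.inv₀ (by fun_prop) fun x hx => (hsub hx.2).1.ne') ?_
        exact (cont_circ hQre).comp (f := fun x : ℝ × ℝ => (x.2, x.1)) (by fun_prop) (fun x hx => ⟨hsub hx.2, trivial⟩)
      exact (this.integrableOn_compact (isCompact_uIcc.prod isCompact_uIcc)).mono_set (prod_mono uIoc_subset_uIcc uIoc_subset_uIcc)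
  rw [sub_eq_iff_eq_add] at key
  rw [key, hB]
  generalize (∫ θ in (-π)..π, W (((1/4 : ℝ) : ℂ) * Complex.exp (θ * Complex.I))) = X
  field_simp
  ring

abbrev PD : Set ℂ := {z | 0 < ‖z‖ ∧ ‖z‖ < 1 / 2}
def Ann (α β : ℝ) : Set ℂ := {z | α < ‖z‖ ∧ ‖z‖ ≤ β}
lemma Ann_meas (α β : ℝ) : MeasurableSet (Ann α β) :=
  (measurableSet_lt measurable_const measurable_norm).inter (measurableSet_le measurable_norm measurable_const)
lemma Ann_intOn (g : ℂ → ℝ) (hg : ContinuousOn g PD) (α β : ℝ) (hα : 0 < α) (hβ : β < 1 / 2) :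
    IntegrableOn g (Ann α β) := by
  have hc : IsCompact {z : ℂ | α ≤ ‖z‖ ∧ ‖z‖ ≤ β} := by
    refine (isCompact_closedBall (0:ℂ) β).of_isClosed_subset ?_ ?_
    · exact (isClosed_le continuous_const continuous_norm).inter (isClosed_le continuous_norm continuous_const)
    · intro z hz; simpa using hz.2
  refine IntegrableOn.mono_set (ContinuousOn.integrableOn_compact hc (hg.mono ?_)) ?_
  · rintro z ⟨h1, h2⟩; exact ⟨by linarith, by linarith⟩
  · rintro z ⟨h1, h2⟩; exact ⟨h1.le, h2⟩

lemma PD_open : IsOpen PD := (isOpen_lt continuous_const continuous_norm).inter (isOpen_lt continuous_norm continuous_const)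

lemma Ann_int (g : ℂ → ℝ) (hg : ContinuousOn g PD) (α β : ℝ) (hα : 0 < α) (hαβ : α ≤ β) (hβ : β < 1 / 2) :
    ∫ z in Ann α β, g z = ∫ s in α..β, s * ∫ θ in (-π)..π, g ((s : ℂ) * Complex.exp (θ * Complex.I)) := by
  classical
  have hm : Measurable ((Ann α β).indicator g) := by
    have h1 : Measurable (PD.indicator g) := by
      have := hg.measurable_piecewise (g := fun _ => (0:ℝ)) continuousOn_const PD_open.measurableSet
      rwa [← Set.piecewise_eq_indicator]
    have h2 : (Ann α β).indicator g = (Ann α β).indicator (PD.indicator g) := by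
      rw [indicator_indicator, inter_eq_left.2]
      rintro z ⟨h1, h2⟩; exact ⟨by linarith, by linarith⟩
    rw [h2]; exact h1.indicator (Ann_meas _ _)
  rw [← integral_indicator (Ann_meas α β), polar_integral _ hm ((integrable_indicator_iff (Ann_meas α β)).2 (Ann_intOn g hg α β hα hβ)),
    intervalIntegral.integral_of_le hαβ]
  have hmem : ∀ s : ℝ, 0 < s → ∀ θ : ℝ, ((s : ℂ) * Complex.exp (θ * Complex.I) ∈ Ann α β ↔ s ∈ Ioc α β) := by
    intro s hs θ
    simp only [Ann, mem_ofPred_eq, norm_polar, abs_of_pos hs, mem_Ioc]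
  rw [setIntegral_eq_of_subset_of_forall_sdiff_eq_zero measurableSet_Ioi (s := Ioc α β) (t := Ioi 0)]
  · refine setIntegral_congr_fun measurableSet_Ioc fun s hs => ?_
    congr 2; funext θ
    rw [indicator_of_mem ((hmem s (hα.trans hs.1) θ).2 hs)]
  · intro s hs; exact hα.trans hs.1
  · rintro s ⟨hs, hs'⟩
    have : ∀ θ : ℝ, (Ann α β).indicator g ((s : ℂ) * Complex.exp (θ * Complex.I)) = 0 := fun θ =>
      indicator_of_notMem (by rwa [hmem s hs θ]) _
    simp [this]

lemma circ_ii (g : ℂ → ℝ) (hg : ContinuousOn g PD) (α β : ℝ) (hα : 0 < α) (hαβ : α ≤ β) (hβ : β < 1 / 2) :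
    IntervalIntegrable (fun s : ℝ => s * ∫ θ in (-π)..π, g ((s : ℂ) * Complex.exp (θ * Complex.I))) volume α β := by
  have hc : Continuous (fun x : ℝ × ℝ => g (((max α (min x.1 β) : ℝ) : ℂ) * Complex.exp (x.2 * Complex.I))) := by
    refine (cont_circ hg).comp_continuous (f := fun x : ℝ × ℝ => (max α (min x.1 β), x.2)) (by fun_prop) fun x => ⟨⟨?_, ?_⟩, trivial⟩
    · exact lt_max_of_lt_left hα
    · exact max_lt (by linarith) ((min_le_right _ _).trans_lt hβ)
  have h2 := intervalIntegral.continuous_parametric_intervalIntegral_of_continuous' (μ := volume)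
    (f := fun s θ : ℝ => g (((max α (min s β) : ℝ) : ℂ) * Complex.exp (θ * Complex.I))) hc (-π) π
  have h3 := (continuous_id.mul h2).intervalIntegrable (μ := volume) α β
  refine h3.congr ?_
  intro s hs
  rw [uIoc_of_le hαβ] at hs
  simp [min_eq_left hs.2, max_eq_right hs.1.le]

lemma Ann_sub_ball (r : ℝ) (hr : 0 < r) : Ann (r/2) (2*r) ⊆ ball 0 (3 * r) := by
  rintro z ⟨h1, h2⟩
  rw [mem_ball_zero_iff]; linarith

lemma J_tendsto (W : ℂ → ℝ) (hI : IntegrableOn (fun z => exp (2 * W z)) (ball 0 (1/2))) :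
    Tendsto (fun r : ℝ => ∫ z in Ann (r/2) (2*r), exp (2 * W z)) (𝓝[>] 0) (𝓝 0) := by
  have h := ((integrable_indicator_iff measurableSet_ball).2 hI).integrableOn (s := univ)
  have h2 : Tendsto (volume ∘ fun r : ℝ => Ann (r/2) (2*r)) (𝓝[>] 0) (𝓝 0) := by
    have h3 : Tendsto (fun r : ℝ => ENNReal.ofReal (π * (3 * r) ^ 2)) (𝓝[>] 0) (𝓝 0) := by
      have : Tendsto (fun r : ℝ => ENNReal.ofReal (π * (3 * r) ^ 2)) (𝓝 0) (𝓝 (ENNReal.ofReal (π * (3 * 0) ^ 2))) :=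
        (Continuous.tendsto (ENNReal.continuous_ofReal.comp (by fun_prop)) _)
      simp at this
      simpa using this.mono_left nhdsWithin_le_nhds
    refine tendsto_of_tendsto_of_tendsto_of_le_of_le' tendsto_const_nhds h3 (Eventually.of_forall fun _ => zero_le) ?_
    filter_upwards [self_mem_nhdsWithin] with r hr
    rw [← volume_ball_complex 0 (3 * r) (by have := mem_Ioi.1 hr; positivity)]
    exact measure_mono (Ann_sub_ball r hr)
  have := ((integrable_indicator_iff measurableSet_ball).2 hI).tendsto_setIntegral_nhds_zero h2
  refine this.congr' ?_
  filter_upwards [Ioo_mem_nhdsGT (show (0:ℝ) < 1/6 by norm_num)] with r hr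
  refine setIntegral_congr_fun (Ann_meas _ _) fun z hz => ?_
  refine indicator_of_mem (ball_subset_ball ?_ (Ann_sub_ball r hr.1 hz)) _
  linarith [hr.2]

lemma A_gt (W : ℂ → ℝ) (hW : Harm W) (hI : IntegrableOn (fun z => exp (2 * W z)) (ball 0 (1/2))) (A B : ℝ)
    (hAB : ∀ s : ℝ, 0 < s → s < 1 / 2 → 
     (∫ θ in (-π)..π, W ((s : ℂ) * Complex.exp (θ * Complex.I))) = 2 * π * (A * log s + B)) : -1 < A := by
  by_contra hA
  rw [not_lt] at hA
  have hce : ContinuousOn (fun z => exp (2 * W z)) PD := Real.continuous_exp.comp_continuousOn (continuousOn_const.mul hW.contOn)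
  have hJ : ∀ᶠ r in 𝓝[>] (0:ℝ), 3 / 2 * π * exp (2 * B) ≤ ∫ z in Ann (r/2) (2*r), exp (2 * W z) := by
    filter_upwards [Ioo_mem_nhdsGT (show (0:ℝ) < 1/6 by norm_num)] with r hr
    obtain ⟨hr0, hr1⟩ := hr
    rw [Ann_int _ hce _ _ (by positivity) (by linarith) (by linarith)]
    have low : ∀ s ∈ Icc (r/2) (2*r), 2 * π * exp (2 * B) / (2 * r) ≤ s * ∫ θ in (-π)..π, exp (2 * W ((s : ℂ) * Complex.exp (θ * Complex.I))) := by
      rintro s ⟨h1, h2⟩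
      have hs0 : 0 < s := by linarith
      have hs1 : s < 1 / 2 := by linarith
      have hl : log s < 0 := Real.log_neg hs0 (by linarith)
      have c1 := cont_circ1 hW.contOn s hs0 hs1
      have c2 : IntervalIntegrable (fun θ : ℝ => 2 * (W ((s : ℂ) * Complex.exp (θ * Complex.I)) + (log s - B))) volume (-π) π :=
        Continuous.intervalIntegrable (continuous_const.mul (c1.add continuous_const)) _ _
      have e1 : ∫ θ in (-π)..π, exp (2 * B) / s ^ 2 * (1 + 2 * (W ((s : ℂ) * Complex.exp (θ * Complex.I)) + (log s - B))) ≤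
          ∫ θ in (-π)..π, exp (2 * W ((s : ℂ) * Complex.exp (θ * Complex.I))) := by
        refine intervalIntegral.integral_mono_on (by linarith [pi_pos]) ?_ ?_ fun θ _ => ?_
        · exact Continuous.intervalIntegrable (continuous_const.mul (continuous_const.add (continuous_const.mul (c1.add continuous_const)))) _ _
        · exact (cont_circ1 hce s hs0 hs1).intervalIntegrable _ _
        · set X := W ((s : ℂ) * Complex.exp (θ * Complex.I))
          have : exp (2 * X) = exp (2 * B) / s ^ 2 * exp (2 * (X + (log s - B))) := by
            have hs2 : s ^ 2 = exp (2 * log s) := by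
              rw [two_mul, exp_add, Real.exp_log hs0]; ring
            rw [hs2, ← exp_sub, ← exp_add]; congr 1; ring
          rw [this]
          gcongr
          linarith [add_one_le_exp (2 * (X + (log s - B)))]
      rw [intervalIntegral.integral_const_mul, intervalIntegral.integral_add (by simp)
        c2, intervalIntegral.integral_const_mul,
        intervalIntegral.integral_add (c1.intervalIntegrable _ _) (by simp), hAB s hs0 hs1,
        intervalIntegral.integral_const, intervalIntegral.integral_const] at e1
      have e2 : 2 * π * exp (2 * B) / s ^ 2 ≤ ∫ θ in (-π)..π, exp (2 * W ((s : ℂ) * Complex.exp (θ * Complex.I))) := by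
        refine le_trans ?_ e1
        have : 2 * π * exp (2 * B) / s ^ 2 = exp (2 * B) / s ^ 2 * (2 * π) := by ring
        rw [this]
        gcongr
        simp only [smul_eq_mul]
        have : 0 ≤ π * ((A + 1) * log s) := mul_nonneg pi_pos.le (mul_nonneg_of_nonpos_of_nonpos (by linarith) hl.le)
        nlinarith
      calc 2 * π * exp (2 * B) / (2 * r) ≤ 2 * π * exp (2 * B) / s := by gcongr
        _ = s * (2 * π * exp (2 * B) / s ^ 2) := by field_simp
        _ ≤ _ := by gcongr
    have hii : IntervalIntegrable (fun s : ℝ => s * ∫ θ in (-π)..π, exp (2 * W ((s : ℂ) * Complex.exp (θ * Complex.I)))) volume (r/2) (2*r) :=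
      circ_ii _ hce _ _ (by positivity) (by linarith) (by linarith)
    have := intervalIntegral.integral_mono_on (by linarith) (by simp) hii low
    rw [intervalIntegral.integral_const, smul_eq_mul] at this
    refine le_trans (le_of_eq ?_) this
    field_simp; ring
  have := ge_of_tendsto (J_tendsto W hI) hJ
  have : 0 < 3 / 2 * π * exp (2 * B) := by positivity
  linarith

lemma slog_tendsto (A B : ℝ) : Tendsto (fun s : ℝ => s * (A * log s + B)) (𝓝[>] 0) (𝓝 0) := by
  have h1 : Tendsto (fun s : ℝ => log s * s) (𝓝[>] 0) (𝓝 0) := by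
    have := (Real.continuous_mul_log.tendsto 0).mono_left (nhdsWithin_le_nhds (s := Ioi 0))
    simp only [zero_mul] at this
    exact this.congr fun s => mul_comm _ _
  have h2 : Tendsto (fun s : ℝ => s) (𝓝[>] 0) (𝓝 0) := tendsto_nhdsWithin_of_tendsto_nhds tendsto_id
  have := (h1.const_mul A).add (h2.const_mul B)
  simp only [mul_zero, add_zero] at this
  refine this.congr fun s => ?_
  ring

lemma I_small (W : ℂ → ℝ) (hW : Harm W) (hI : IntegrableOn (fun z => exp (2 * W z)) (ball 0 (1/2))) (A B : ℝ)
    (hAB : ∀ s : ℝ, 0 < s → s < 1 / 2 → 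
     (∫ θ in (-π)..π, W ((s : ℂ) * Complex.exp (θ * Complex.I))) = 2 * π * (A * log s + B)) (ε : ℝ) (hε : 0 < ε) :
    ∀ᶠ r in 𝓝[>] (0:ℝ), ∫ z in Ann (r/2) (2*r), |W z| ≤ ε * r := by
  have hce : ContinuousOn (fun z => exp (2 * W z)) PD := Real.continuous_exp.comp_continuousOn (continuousOn_const.mul hW.contOn)
  set J : ℝ → ℝ := fun r => ∫ z in Ann (r/2) (2*r), exp (2 * W z) with hJd
  have hJ : Tendsto J (𝓝[>] 0) (𝓝 0) := J_tendsto W hI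
  have hJ0 : ∀ r, 0 ≤ J r := fun r => integral_nonneg fun z => (exp_pos _).le
  have hid : Tendsto (fun s : ℝ => s) (𝓝[>] 0) (𝓝 0) := tendsto_nhdsWithin_of_tendsto_nhds tendsto_id
  have hk : Tendsto (fun r => (9 * π + 1) * √(J r + r)) (𝓝[>] 0) (𝓝 0) := by
    have := (((hJ.add hid).sqrt).const_mul (9 * π + 1))
    simpa using this
  -- the integral of W
  have hW2 : ∀ᶠ r in 𝓝[>] (0:ℝ), |∫ z in Ann (r/2) (2*r), W z| ≤ ε / 2 * r := by
    have h1 := (slog_tendsto A B).abs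
    rw [abs_zero] at h1
    have h2 : ∀ᶠ s in 𝓝[>] (0:ℝ), |s * (A * log s + B)| < ε / (6 * π) := h1.eventually_lt_const (by positivity)
    obtain ⟨η, hη, h3⟩ := mem_nhdsGT_iff_exists_Ioo_subset.1 h2
    filter_upwards [Ioo_mem_nhdsGT (show (0:ℝ) < 1/6 by norm_num), Ioo_mem_nhdsGT (show (0:ℝ) < η/3 from div_pos hη (by norm_num))] with r hr hr'
    obtain ⟨hr0, hr1⟩ := hr
    rw [Ann_int _ hW.contOn _ _ (by positivity) (by linarith) (by linarith)]
    have := intervalIntegral.norm_integral_le_of_norm_le_const (a := r/2) (b := 2*r) (C := ε / 3)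
      (f := fun s : ℝ => s * ∫ θ in (-π)..π, W ((s : ℂ) * Complex.exp (θ * Complex.I))) ?_
    · rw [Real.norm_eq_abs, abs_of_pos (by linarith : 0 < 2 * r - r / 2)] at this
      refine this.trans (le_of_eq ?_)
      ring
    · intro s hs
      rw [uIoc_of_le (by linarith)] at hs
      have hs0 : 0 < s := by linarith [hs.1]
      rw [hAB s hs0 (by linarith [hs.2])]
      have h4 := h3 ⟨hs0, by linarith [hs.2, hr'.2]⟩
      simp only [mem_ofPred_eq] at h4
      have e : s * (2 * π * (A * log s + B)) = 2 * π * (s * (A * log s + B)) := by ring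
      rw [e, norm_mul, Real.norm_eq_abs, Real.norm_eq_abs, abs_of_pos (by positivity : 0 < 2 * π)]
      calc 2 * π * |s * (A * log s + B)| ≤ 2 * π * (ε / (6 * π)) := by gcongr
        _ = ε / 3 := by field_simp; ring
  filter_upwards [hW2, hk.eventually_lt_const (show 0 < ε / 2 by positivity), Ioo_mem_nhdsGT (show (0:ℝ) < 1/6 by norm_num)] with r h1 h2 hr
  obtain ⟨hr0, hr1⟩ := hr
  set κ := √(J r + r) with hκ
  have hJr : 0 < J r + r := by have := hJ0 r; linarith
  have hκ0 : 0 < κ := Real.sqrt_pos.2 hJr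
  have hκ2 : κ ^ 2 = J r + r := Real.sq_sqrt hJr.le
  have iW := Ann_intOn W hW.contOn (r/2) (2*r) (by positivity) (by linarith)
  have iE := Ann_intOn _ hce (r/2) (2*r) (by positivity) (by linarith)
  have hvol : volume.real (Ann (r/2) (2*r)) ≤ 9 * π * r ^ 2 := by
    have : volume (Ann (r/2) (2*r)) ≤ ENNReal.ofReal (π * (3 * r) ^ 2) := by
      rw [← volume_ball_complex 0 (3 * r) (by positivity)]
      exact measure_mono (Ann_sub_ball r hr0)
    refine (ENNReal.toReal_le_of_le_ofReal (by positivity) this).trans (le_of_eq ?_)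
    ring
  have hfin : volume (Ann (r/2) (2*r)) ≠ ⊤ := 
    ((measure_mono (Ann_sub_ball r hr0)).trans_lt measure_ball_lt_top).ne
  have pt : ∀ z, |W z| ≤ (κ / r + r / κ * exp (2 * W z)) - W z := by
    intro z
    have hx : exp (2 * W z) = exp (W z) ^ 2 := by rw [← exp_nat_mul]; norm_num
    have am : 2 * exp (W z) ≤ κ / r + r / κ * exp (2 * W z) := by
      rw [hx]
      have : κ / r + r / κ * exp (W z) ^ 2 - 2 * exp (W z) = r / κ * (exp (W z) - κ / r) ^ 2 := by
        field_simp; ring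
      have h0 : 0 ≤ r / κ * (exp (W z) - κ / r) ^ 2 := by positivity
      linarith
    have e1 := add_one_le_exp (W z)
    have e2 := exp_pos (W z)
    rcases abs_cases (W z) with ⟨h, _⟩ | ⟨h, _⟩ <;> rw [h] <;> linarith
  have icst : IntegrableOn (fun _ : ℂ => κ / r) (Ann (r/2) (2*r)) := integrableOn_const hfin
  have iE2 : IntegrableOn (fun z : ℂ => r / κ * exp (2 * W z)) (Ann (r/2) (2*r)) := iE.const_mul _
  have iS : IntegrableOn (fun z : ℂ => κ / r + r / κ * exp (2 * W z)) (Ann (r/2) (2*r)) := icst.add iE2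
  calc ∫ z in Ann (r/2) (2*r), |W z| ≤ ∫ z in Ann (r/2) (2*r), ((κ / r + r / κ * exp (2 * W z)) - W z) :=
        integral_mono iW.abs (iS.sub iW) pt
    _ = κ / r * volume.real (Ann (r/2) (2*r)) + r / κ * J r - ∫ z in Ann (r/2) (2*r), W z := by
        rw [integral_sub iS iW, integral_add icst iE2, integral_const_mul,
          setIntegral_const, smul_eq_mul, mul_comm (volume.real _)]
    _ ≤ κ / r * (9 * π * r ^ 2) + r / κ * κ ^ 2 + ε / 2 * r := by
        have := neg_abs_le (∫ z in Ann (r/2) (2*r), W z)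
        have a1 : κ / r * volume.real (Ann (r/2) (2*r)) ≤ κ / r * (9 * π * r ^ 2) := by gcongr
        have a2 : r / κ * J r ≤ r / κ * κ ^ 2 := by gcongr; linarith
        linarith
    _ = ((9 * π + 1) * κ) * r + ε / 2 * r := by field_simp
    _ ≤ ε / 2 * r + ε / 2 * r := by gcongr
    _ = ε * r := by ring

lemma main_harm (w : ℂ → ℝ) (hw : LocallyIntegrableOn w DS) (Hw : Weak w)
    (hI : IntegrableOn (fun z => exp (2 * WW w z)) (ball 0 (1/2))) :
    ∃ A : ℝ, -1 < A ∧ Tendsto (fun z => (QQ (WW w) z).re) (𝓝[≠] 0) (𝓝 A) := by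
  have hW : Harm (WW w) := fun z h1 h2 => WW_harm w hw Hw z h1 h2
  obtain ⟨A, B, hAB⟩ := mean_log (WW w) hW
  have hAB2 := fun s h1 h2 => (hAB s h1 h2).2
  refine ⟨A, A_gt _ hW hI A B hAB2, ?_⟩
  obtain ⟨C, hC, hgrad⟩ := WW_grad
  have hQ0 : QQ (WW w) 0 = 0 := by simp [QQ]
  have tn : Tendsto (fun z : ℂ => ‖z‖) (𝓝[≠] 0) (𝓝[>] 0) := tendsto_norm_nhdsNE_zero
  have hev : ∀ᶠ z : ℂ in 𝓝[≠] 0, 0 < ‖z‖ ∧ ‖z‖ < 1 / 6 := tn.eventually (Ioo_mem_nhdsGT (by norm_num))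
  have hlim := Complex.tendsto_limUnder_of_differentiable_on_punctured_nhds_of_isLittleO (f := QQ (WW w)) (c := 0) ?_ ?_
  · set c := limUnder (𝓝[≠] (0:ℂ)) (QQ (WW w))
    have hre : Tendsto (fun z => (QQ (WW w) z).re) (𝓝[≠] 0) (𝓝 c.re) := (Complex.continuous_re.tendsto c).comp hlim
    suffices A = c.re by rw [this]; exact hre
    by_contra hne
    have hd : 0 < |A - c.re| := abs_pos.2 (sub_ne_zero.2 hne)
    have h1 : ∀ᶠ z in 𝓝[≠] (0:ℂ), |(QQ (WW w) z).re - c.re| < |A - c.re| / 2 := by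
      have := (hre.sub_const c.re).abs
      simp only [sub_self, abs_zero] at this
      exact this.eventually_lt_const (by positivity)
    rw [eventually_nhdsWithin_iff, Metric.eventually_nhds_iff] at h1
    obtain ⟨η, hη, h1⟩ := h1
    set s := min (η / 2) (1 / 4)
    have hs0 : 0 < s := by positivity
    have hs1 : s < 1 / 2 := (min_le_right _ _).trans_lt (by norm_num)
    have hs2 : s < η := (min_le_left _ _).trans_lt (by linarith)
    have hQre : ContinuousOn (fun z => (QQ (WW w) z).re) PD := Complex.continuous_re.comp_continuousOn hW.QcontOn
    have c1 := (cont_circ1 hQre s hs0 hs1).intervalIntegrable (μ := volume) (-π) π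
    have e := intervalIntegral.norm_integral_le_of_norm_le_const (a := -π) (b := π) (C := |A - c.re| / 2)
      (f := fun θ : ℝ => (QQ (WW w) ((s : ℂ) * Complex.exp (θ * Complex.I))).re - c.re) ?_
    · rw [intervalIntegral.integral_sub c1 (by simp), (hAB s hs0 hs1).1, intervalIntegral.integral_const, smul_eq_mul,
        show 2 * π * A - (π - -π) * c.re = 2 * π * (A - c.re) by ring, norm_mul, Real.norm_eq_abs, Real.norm_eq_abs,
        abs_of_pos (by positivity : 0 < 2 * π), show |π - -π| = 2 * π by rw [abs_of_pos (by linarith [pi_pos])]; ring] at e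
      nlinarith [pi_pos]
    · intro θ _
      have hn : ‖(s : ℂ) * Complex.exp (θ * Complex.I)‖ = s := by rw [norm_polar, abs_of_pos hs0]
      refine (h1 (y := (s : ℂ) * Complex.exp (θ * Complex.I)) ?_ ?_).le
      · rw [dist_zero_right, hn]; exact hs2
      · intro h0
        rw [mem_singleton_iff] at h0
        rw [h0, norm_zero] at hn
        linarith
  · filter_upwards [hev] with z hz
    exact QQ_diff _ z (hW z hz.1 (by linarith [hz.2]))
  · rw [Asymptotics.isLittleO_iff]
    intro ε hε
    have hs := tn.eventually (I_small (WW w) hW hI A B hAB2 (ε / (2 * C + 1)) (by positivity))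
    filter_upwards [hev, hs] with z hz hs
    obtain ⟨h0, h1⟩ := hz
    rw [hQ0, sub_zero, sub_zero, norm_inv]
    have hsub : closedBall z (‖z‖ / 4) ⊆ Ann (‖z‖ / 2) (2 * ‖z‖) := by
      intro x hx
      rw [mem_closedBall, dist_eq_norm] at hx
      have a1 : ‖x‖ ≤ ‖x - z‖ + ‖z‖ := by simpa using norm_add_le (x - z) z
      have a2 := norm_sub_norm_le z x
      rw [norm_sub_rev] at a2
      exact ⟨by linarith, by linarith⟩
    have hInteg : ∫ x in closedBall z (‖z‖ / 4), |w x| ≤ ε / (2 * C + 1) * ‖z‖ := by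
      refine le_trans ?_ hs
      have e1 : ∫ x in closedBall z (‖z‖ / 4), |w x| = ∫ x in closedBall z (‖z‖ / 4), |WW w x| := by
        refine setIntegral_congr_ae measurableSet_closedBall ?_
        filter_upwards [WW_ae w hw Hw] with x hx hxb
        have := hsub hxb
        rw [hx (by linarith [this.1]) (by linarith [this.2])]
      rw [e1]
      refine setIntegral_mono_set (Ann_intOn _ hW.contOn _ _ (by positivity) (by linarith)).abs
        (Eventually.of_forall fun x => abs_nonneg _) (Eventually.of_forall hsub)
    have g1 := hgrad w hw Hw z h0 (by linarith) 1 (by simp)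
    have g2 := hgrad w hw Hw z h0 (by linarith) Complex.I (by simp)
    set T := C * (‖z‖ ^ 3)⁻¹ * ∫ x in closedBall z (‖z‖ / 4), |w x|
    have hT : T ≤ C * (‖z‖ ^ 3)⁻¹ * (ε / (2 * C + 1) * ‖z‖) :=
      mul_le_mul_of_nonneg_left hInteg (by positivity)
    calc ‖QQ (WW w) z‖ ≤ ‖z‖ * (T + T) := by
          unfold QQ
          rw [norm_mul]
          gcongr
          refine (norm_sub_le _ _).trans ?_
          rw [norm_mul, Complex.norm_I, one_mul, Complex.norm_real, Complex.norm_real]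
          exact add_le_add g1 g2
      _ ≤ ‖z‖ * (2 * (C * (‖z‖ ^ 3)⁻¹ * (ε / (2 * C + 1) * ‖z‖))) := by gcongr; linarith
      _ = (2 * C) / (2 * C + 1) * ε * ‖z‖⁻¹ := by field_simp
      _ ≤ 1 * ε * ‖z‖⁻¹ := by
          gcongr
          rw [div_le_one (by positivity)]; linarith
      _ = ε * ‖z‖⁻¹ := by ring


lemma DS_meas : MeasurableSet DS := measurableSet_ball.diff (measurableSet_singleton _)

lemma jordan_negPart_zero (μ : SignedMeasure ℂ) (h0 : μ.totalVariation DSᶜ = 0)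
    (hpos : ∀ A : Set ℂ, MeasurableSet A → A ⊆ DS → 0 ≤ μ A) : μ.toJordanDecomposition.negPart = 0 := by
  rw [← Measure.measure_univ_eq_zero, ← union_compl_self DS]
  refine le_antisymm ((measure_union_le _ _).trans ?_) (zero_le)
  have e1 : μ.toJordanDecomposition.negPart DSᶜ = 0 := by
    rw [SignedMeasure.totalVariation, Measure.add_apply] at h0
    exact (add_eq_zero.1 h0).2
  rw [e1, add_zero]
  obtain ⟨i, hi₁, hi₂, hi₃, h1, h2⟩ := μ.toJordanDecomposition_spec
  rw [h2, SignedMeasure.toMeasureOfLEZero_apply _ _ hi₁.compl DS_meas]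
  have a1 : 0 ≤ μ (iᶜ ∩ DS) := hpos _ (hi₁.compl.inter DS_meas) inter_subset_right
  have a2 : μ (iᶜ ∩ DS) ≤ 0 := 
    μ.nonpos_of_restrict_le_zero (μ.restrict_le_zero_subset hi₁.compl Set.inter_subset_left hi₃)
  have a3 : μ (iᶜ ∩ DS) = 0 := le_antisymm a2 a1
  simp [a3]

lemma lap_zero_off (h : ℝ → ℝ) (hh : ContDiff ℝ (⊤ : ℕ∞) h) (b : ℝ) (hb : 0 < b)
    (hz : ∀ q, b ^ 2 ≤ q → h q = 0) (p x : ℂ) (hx : x ∉ closedBall p b) :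
    lap (fun w => h (‖w - p‖ ^ 2)) x = 0 := by
  rw [lap_radial h hh p x]
  have hq : b ^ 2 < ‖x - p‖ ^ 2 := by
    rw [mem_closedBall, dist_eq_norm, not_le] at hx
    gcongr
  have d1 : ∀ q, b ^ 2 < q → deriv h q = 0 := by
    intro q hq
    have : h =ᶠ[𝓝 q] fun _ => 0 := by
      filter_upwards [Ioi_mem_nhds hq] with y hy using hz y hy.le
    rw [this.deriv_eq]; simp
  have d2 : deriv (deriv h) (‖x - p‖ ^ 2) = 0 := by
    have : deriv h =ᶠ[𝓝 (‖x - p‖ ^ 2)] fun _ => 0 := by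
      filter_upwards [Ioi_mem_nhds hq] with y hy using d1 y hy
    rw [this.deriv_eq]; simp
  rw [d1 _ hq, d2]; ring

lemma lap_rad_cont (h : ℝ → ℝ) (hh : ContDiff ℝ (⊤ : ℕ∞) h) (p : ℂ) :
    Continuous (lap (fun w => h (‖w - p‖ ^ 2))) := by
  have hh' : ContDiff ℝ (⊤ : ℕ∞) (deriv h) := (contDiff_infty_iff_deriv.1 hh).2
  have hh'' : ContDiff ℝ (⊤ : ℕ∞) (deriv (deriv h)) := (contDiff_infty_iff_deriv.1 hh').2
  have e : lap (fun w => h (‖w - p‖ ^ 2)) = fun x => 4 * (deriv h (‖x - p‖ ^ 2) + ‖x - p‖ ^ 2 * deriv (deriv h) (‖x - p‖ ^ 2)) :=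
    funext fun x => lap_radial h hh p x
  rw [e]
  have := hh'.continuous
  have := hh''.continuous
  fun_prop

lemma rad_test (h : ℝ → ℝ) (hh : ContDiff ℝ (⊤ : ℕ∞) h) (b : ℝ) (p : ℂ) (hb : 0 < b)
    (hz : ∀ q, b ^ 2 ≤ q → h q = 0) (h1 : b < ‖p‖) (h2 : b + ‖p‖ < 1) :
    IsTestOn (fun w => h (‖w - p‖ ^ 2)) DS := by
  have hts : tsupport (fun w => h (‖w - p‖ ^ 2)) ⊆ closedBall p b := by
    refine closure_minimal ?_ isClosed_closedBall
    intro x hx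
    by_contra hc
    exact hx (hz _ (sq_of_notMem hb hc))
  refine ⟨?_, ?_, hts.trans (cball_sub_DS p b h1 h2)⟩
  · exact hh.comp ((contDiff_id.sub contDiff_const).norm_sq ℝ)
  · exact (isCompact_closedBall p b).of_isClosed_subset (isClosed_tsupport _) hts

lemma pot_loc (ν : Measure ℂ) [IsFiniteMeasure ν] (hν : ν (ball (0:ℂ) 1)ᶜ = 0) :
    LocallyIntegrableOn (pot ν) DS :=
  ((pot_intOn ν hν 1 one_pos).mono_set sdiff_subset).locallyIntegrableOn

lemma weak_diff (u : ℂ → ℝ) (hu : LocallyIntegrableOn u DS) (ν : Measure ℂ) [IsFiniteMeasure ν]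
    (hν : ν (ball (0:ℂ) 1)ᶜ = 0)
    (hc : ∀ φ : ℂ → ℝ, IsTestOn φ DS → (-∫ x in DS, u x * lap φ x) = ∫ y, φ y ∂ν) :
    Weak (fun z => u z - pot ν z) := by
  intro h b p hh hb hz h1 h2
  have t := hc _ (rad_test h hh b p hb hz h1 h2)
  have hs := cball_sub_DS p b h1 h2
  have i1 := int_of_supp u hu _ (isCompact_closedBall p b) hs _ (lap_rad_cont h hh p)
    (fun x hx => lap_zero_off h hh b hb hz p x hx)
  have i2 := int_of_supp _ (pot_loc ν hν) _ (isCompact_closedBall p b) hs _ (lap_rad_cont h hh p)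
    (fun x hx => lap_zero_off h hh b hb hz p x hx)
  simp_rw [sub_mul]
  rw [integral_sub i1 i2, pot_lap ν hν h hh b hb hz p]
  rw [setIntegral_eq_integral_of_forall_compl_eq_zero] at t
  · linarith
  · intro x hx
    rw [lap_zero_off h hh b hb hz p x (fun hc => hx (hs hc)), mul_zero]

lemma exp_int (u : ℂ → ℝ) (hu : LocallyIntegrableOn u DS) (ν : Measure ℂ) [IsFiniteMeasure ν]
    (hν : ν (ball (0:ℂ) 1)ᶜ = 0) (harea : IntegrableOn (fun z => Real.exp (2 * u z)) (ball (0 : ℂ) 1) volume)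
    (Hw : Weak (fun z => u z - pot ν z)) :
    IntegrableOn (fun z => exp (2 * WW (fun z => u z - pot ν z) z)) (ball 0 (1/2)) := by
  obtain ⟨C, hC⟩ := pot_lower ν hν
  have hsub : ball (0:ℂ) (1/2) ⊆ ball 0 1 := ball_subset_ball (by norm_num)
  have hb : IntegrableOn (fun z => Real.exp (2 * u z)) (ball (0 : ℂ) (1/2)) := harea.mono_set hsub
  have hb2 : IntegrableOn (fun z => Real.exp (2 * u z) * exp (2 * C)) (ball (0 : ℂ) (1/2)) := hb.mul_const _
  have hm : AEStronglyMeasurable (fun z => Real.exp (2 * u z) * exp (-2 * pot ν z)) (volume.restrict (ball (0 : ℂ) (1/2))) :=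
    hb.aestronglyMeasurable.mul (by have := pot_meas ν; exact (Measurable.aestronglyMeasurable (by fun_prop)))
  have h1 : IntegrableOn (fun z => Real.exp (2 * u z) * exp (-2 * pot ν z)) (ball (0 : ℂ) (1/2)) := by
    refine Integrable.mono' hb2 hm ?_
    rw [ae_restrict_iff' measurableSet_ball]
    refine Eventually.of_forall fun z hz => ?_
    rw [Real.norm_eq_abs, abs_of_pos (by positivity)]
    refine mul_le_mul_of_nonneg_left (exp_le_exp.2 ?_) (exp_pos _).le
    linarith [hC z (hsub hz)]
  refine h1.congr_fun_ae ?_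
  have hne : ∀ᵐ z : ℂ, z ≠ 0 := by simp [ae_iff]
  filter_upwards [ae_restrict_mem measurableSet_ball, ae_restrict_of_ae hne, ae_restrict_of_ae (WW_ae (fun z => u z - pot ν z) (hu.sub (pot_loc ν hν)) Hw)] with z hz h0 hw
  rw [mem_ball_zero_iff] at hz
  rw [← hw (norm_pos_iff.2 h0) hz, ← exp_add]
  congr 1; ring

def tn (n : ℕ) : ℝ := 1 / ((n : ℝ) + 2)
lemma tn_pos (n : ℕ) : 0 < tn n := by unfold tn; positivity
lemma tn_exp (n : ℕ) : Real.exp (tn n) ≤ 2 := by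
  have h1 : tn n ≤ 1 / 2 := by
    unfold tn
    exact one_div_le_one_div_of_le (by norm_num) (by linarith [Nat.cast_nonneg (α := ℝ) n])
  have h2 : Real.exp (tn n) ≤ Real.exp (1 / 2) := exp_le_exp.2 h1
  have h3 : Real.exp (1 / 2) ^ 2 = Real.exp 1 := by rw [← exp_nat_mul]; norm_num
  have := Real.exp_one_lt_d9
  nlinarith [exp_pos (1/2)]
lemma tn_tendsto : Tendsto tn atTop (𝓝[≠] 0) := by
  refine tendsto_nhdsWithin_iff.2 ⟨?_, Eventually.of_forall fun n => (tn_pos n).ne'⟩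
  unfold tn
  have : Tendsto (fun n : ℕ => (n : ℝ) + 2) atTop atTop := tendsto_atTop_add_const_right _ _ tendsto_natCast_atTop_atTop
  simp only [one_div]
  exact this.inv_tendsto_atTop

lemma quot_tendsto (v : ℂ → ℝ) (z : ℂ) (hv : DifferentiableAt ℝ v z) :
    Tendsto (fun n => (v (Real.exp (tn n) • z) - v z) / tn n) atTop (𝓝 (fderiv ℝ v z z)) := by
  have h1 : HasDerivAt (fun t : ℝ => Real.exp t • z) z 0 := by
    have := (Real.hasDerivAt_exp 0).smul_const z
    simpa using this
  have h2 : HasFDerivAt v (fderiv ℝ v z) (Real.exp 0 • z) := by simpa using hv.hasFDerivAt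
  have h3 := h2.comp_hasDerivAt (0:ℝ) h1
  rw [hasDerivAt_iff_tendsto_slope] at h3
  refine (h3.comp tn_tendsto).congr fun n => ?_
  simp [slope_def_field]

def gl (ν : Measure ℂ) (z : ℂ) : ENNReal :=
  liminf (fun n => ‖(pot ν (Real.exp (tn n) • z) - pot ν z) / tn n‖ₑ) atTop

lemma gq_meas (ν : Measure ℂ) [IsFiniteMeasure ν] (n : ℕ) : 
    Measurable (fun z => ‖(pot ν (Real.exp (tn n) • z) - pot ν z) / tn n‖ₑ) := by
  have := pot_meas ν
  fun_prop

lemma gl_meas (ν : Measure ℂ) [IsFiniteMeasure ν] : Measurable (gl ν) :=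
  Measurable.liminf fun n => gq_meas ν n

lemma gl_int (ν : Measure ℂ) [IsFiniteMeasure ν] (hν : ν (ball (0:ℂ) 1)ᶜ = 0) (r : ℝ) (hr : 0 < r) :
    ∫⁻ z in ball (0:ℂ) (2 * r), gl ν z ≤ ENNReal.ofReal (r ^ 2) * ∫⁻ y, ENNReal.ofReal (kr r y) ∂ν := by
  refine (lintegral_liminf_le (fun n => gq_meas ν n)).trans ?_
  refine liminf_le_of_le (by isBoundedDefault) fun b hb => ?_
  obtain ⟨n, hn⟩ := hb.exists
  exact hn.trans (pot_quot ν hν _ r (tn_pos n) (tn_exp n) hr)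

lemma ptwise (u : ℂ → ℝ) (ν : Measure ℂ) (W : ℂ → ℝ) (hW : Harm W)
    (hae : ∀ᵐ p : ℂ, 0 < ‖p‖ → ‖p‖ < 1 / 2 → u p - pot ν p = W p) :
    ∀ᵐ z : ℂ, 0 < ‖z‖ → ‖z‖ < 1 / 4 → 
      ENNReal.ofReal (-(fderiv ℝ u z z)) ≤ ENNReal.ofReal (-(QQ W z).re) + gl ν z := by
  have h2 := ae_all_iff.2 fun n => ae_smul_real (Real.exp (tn n)) (exp_pos _).ne' _ hae
  filter_upwards [hae, h2] with z h1 h2 hz0 hz1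
  by_cases hd : DifferentiableAt ℝ u z
  · have q1 := quot_tendsto u z hd
    have q2 := quot_tendsto W z (hW.diffAt z hz0 (by linarith))
    have q3 : Tendsto (fun n => (pot ν (Real.exp (tn n) • z) - pot ν z) / tn n) atTop (𝓝 (fderiv ℝ u z z - fderiv ℝ W z z)) := by
      refine (q1.sub q2).congr fun n => ?_
      have e1 := h1 hz0 (by linarith)
      have nn : ‖Real.exp (tn n) • z‖ = Real.exp (tn n) * ‖z‖ := by
        rw [norm_smul, Real.norm_eq_abs, abs_of_pos (exp_pos _)]
      have e2 := h2 n (by rw [nn]; positivity) (by rw [nn]; nlinarith [tn_exp n])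
      rw [← e1, ← e2]; ring
    have hg : gl ν z = ‖fderiv ℝ u z z - fderiv ℝ W z z‖ₑ := q3.enorm.liminf_eq
    rw [hg, QQ_re, ← ofReal_norm_eq_enorm, Real.norm_eq_abs]
    refine le_trans (ENNReal.ofReal_le_ofReal ?_) ENNReal.ofReal_add_le
    have := neg_abs_le (fderiv ℝ u z z - fderiv ℝ W z z)
    linarith
  · rw [fderiv_zero_of_not_differentiableAt hd]; simp

def SA (r : ℝ) : Set ℂ := {z | r < ‖z‖ ∧ ‖z‖ < 2 * r}
lemma SA_open (r : ℝ) : IsOpen (SA r) :=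
  (isOpen_lt continuous_const continuous_norm).inter (isOpen_lt continuous_norm continuous_const)

lemma SA_vol (r : ℝ) (hr : 0 < r) : ENNReal.ofReal (π * (r / 2) ^ 2) ≤ volume (SA r) := by
  rw [← volume_ball_complex ((3 / 2 * r : ℝ) : ℂ) (r / 2) (by positivity)]
  refine measure_mono fun z hz => ?_
  rw [mem_ball, dist_eq_norm] at hz
  have h0 : ‖((3 / 2 * r : ℝ) : ℂ)‖ = 3 / 2 * r := by rw [Complex.norm_real, Real.norm_eq_abs, abs_of_pos (by positivity)]
  have h1 := norm_sub_norm_le z ((3 / 2 * r : ℝ) : ℂ)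
  have h2 := norm_sub_norm_le ((3 / 2 * r : ℝ) : ℂ) z
  rw [norm_sub_rev] at h2
  constructor <;> linarith

lemma SA_sub (r : ℝ) : SA r ⊆ ball 0 (2 * r) := fun z hz => mem_ball_zero_iff.2 hz.2

lemma polar_cmp (f1 f2 : ℂ → ENNReal) (h1 : Measurable f1) (h2 : Measurable f2) (r : ℝ) (hr : 0 < r)
    (h : ∀ᵐ s : ℝ, s ∈ Ioo r (2 * r) → 
      ∫⁻ θ in Ioo (-π) π, f1 ((s : ℂ) * Complex.exp (θ * Complex.I)) ≤
      ∫⁻ θ in Ioo (-π) π, f2 ((s : ℂ) * Complex.exp (θ * Complex.I))) :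
    ∫⁻ z in SA r, f1 z ≤ ∫⁻ z in SA r, f2 z := by
  have hm := (SA_open r).measurableSet
  rw [← lintegral_indicator hm, ← lintegral_indicator hm, polar_lintegral _ (h1.indicator hm), polar_lintegral _ (h2.indicator hm)]
  refine lintegral_mono_ae ?_
  filter_upwards [ae_restrict_of_ae h, ae_restrict_mem measurableSet_Ioi] with s hs hs0
  refine mul_le_mul_right ?_ _
  have hn : ∀ θ : ℝ, ‖(s : ℂ) * Complex.exp (θ * Complex.I)‖ = s := fun θ => by
    rw [norm_polar, abs_of_pos hs0]
  by_cases hc : s ∈ Ioo r (2 * r)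
  · have : ∀ θ : ℝ, (s : ℂ) * Complex.exp (θ * Complex.I) ∈ SA r := fun θ => by
      unfold SA; rw [mem_ofPred_eq, hn]; exact hc
    simp only [indicator_of_mem (this _)]
    exact hs hc
  · have : ∀ θ : ℝ, (s : ℂ) * Complex.exp (θ * Complex.I) ∉ SA r := fun θ => by
      unfold SA; rw [mem_ofPred_eq, hn]; exact hc
    simp only [indicator_of_notMem (this _), le_refl]

lemma ofReal_int_le {α : Type*} [MeasurableSpace α] (m : Measure α) (f : α → ℝ) :
    ENNReal.ofReal (∫ x, f x ∂m) ≤ ∫⁻ x, ENNReal.ofReal (f x) ∂m := by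
  by_cases hf : Integrable f m
  · rw [integral_eq_lintegral_pos_part_sub_lintegral_neg_part hf]
    refine (ENNReal.ofReal_le_ofReal (sub_le_self _ ENNReal.toReal_nonneg)).trans ENNReal.ofReal_toReal_le
  · rw [integral_undef hf]; simp

lemma fmeas (u : ℂ → ℝ) : Measurable (fun z => fderiv ℝ u z z) := by
  have e : (fun z => fderiv ℝ u z z) = fun z : ℂ => z.re * fderiv ℝ u z 1 + z.im * fderiv ℝ u z Complex.I :=
    funext fun z => clm_lin _ z
  rw [e]
  have := measurable_fderiv_apply_const ℝ u (1:ℂ)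
  have := measurable_fderiv_apply_const ℝ u Complex.I
  exact (Complex.measurable_re.mul ‹_›).add (Complex.measurable_im.mul ‹_›)

lemma flux_eq (u : ℂ → ℝ) (s : ℝ) : flux u s = 
    ∫ θ in (-π)..π, fderiv ℝ u ((s : ℂ) * Complex.exp (θ * Complex.I)) ((s : ℂ) * Complex.exp (θ * Complex.I)) := by
  rw [← per_int (fun z => fderiv ℝ u z z)]
  unfold flux
  congr 1
  funext θ
  rw [show (s : ℂ) * Complex.exp (θ * Complex.I) = s • Complex.exp (θ * Complex.I) from (Complex.real_smul).symm, map_smul, smul_eq_mul, mul_comm]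

lemma flux_lower (u : ℂ → ℝ) (s c : ℝ) (h : flux u s ≤ -(2 * π * c)) :
    ∫⁻ θ in Ioo (-π) π, (fun _ : ℂ => ENNReal.ofReal c) ((s : ℂ) * Complex.exp (θ * Complex.I)) ≤
    ∫⁻ θ in Ioo (-π) π, (fun z => ENNReal.ofReal (-(fderiv ℝ u z z))) ((s : ℂ) * Complex.exp (θ * Complex.I)) := by
  rw [flux_eq, intervalIntegral.integral_of_le (by linarith [pi_pos]), integral_Ioc_eq_integral_Ioo] at h
  refine le_trans ?_ (ofReal_int_le _ _)
  rw [integral_neg, setLIntegral_const, Real.volume_Ioo, ← ENNReal.ofReal_mul' (by linarith [pi_pos])]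
  refine ENNReal.ofReal_le_ofReal ?_
  linarith

lemma core (u : ℂ → ℝ) (ν : Measure ℂ) [IsFiniteMeasure ν] (hν : ν (ball (0:ℂ) 1)ᶜ = 0) (hν0 : ν {0} = 0)
    (W : ℂ → ℝ) (hW : Harm W)
    (hae : ∀ᵐ p : ℂ, 0 < ‖p‖ → ‖p‖ < 1 / 2 → u p - pot ν p = W p)
    (A : ℝ) (hA : -1 < A) (hQ : Tendsto (fun z => (QQ W z).re) (𝓝[≠] 0) (𝓝 A))
    (lam : ℝ) (E : Set ℝ) (hEfull : volume (Set.Ioo (0 : ℝ) 1 \ E) = 0)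
    (hlam : Tendsto (flux u) (nhdsWithin 0 E) (𝓝 (2 * π * lam))) :
    -1 < lam := by
  by_contra hl
  rw [not_lt] at hl
  set m := max (-A) 0 with hm
  have hm1 : m < 1 := max_lt (by linarith) one_pos
  have hm0 : 0 ≤ m := le_max_right _ _
  set δ := (1 - m) / 4 with hδ
  have hδ0 : 0 < δ := by rw [hδ]; linarith
  -- flux
  have f1 : ∀ᶠ s in 𝓝[E] 0, flux u s ≤ -(2 * π * (1 - δ)) := by
    have : 2 * π * lam < -(2 * π * (1 - δ)) := by
      have := pi_pos
      nlinarith [mul_pos this hδ0]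
    filter_upwards [hlam.eventually_lt_const this] with s hs using hs.le
  obtain ⟨ρ1, hρ1, F1⟩ := Metric.mem_nhdsWithin_iff.1 f1
  have f2 : ∀ᶠ z in 𝓝[≠] (0:ℂ), -(QQ W z).re ≤ m + δ := by
    have : A - δ < A := by linarith
    filter_upwards [hQ.eventually_const_lt this] with z hz
    have : -A ≤ m := le_max_left _ _
    linarith
  obtain ⟨ρ2, hρ2, F2⟩ := Metric.mem_nhdsWithin_iff.1 f2
  set κ := π / 4 * δ with hκ
  have hκ0 : 0 < κ := by positivity
  have f3 := (kr_tendsto ν hν0).eventually_le_const (show (0 : ENNReal) < ENNReal.ofReal κ from ENNReal.ofReal_pos.2 hκ0)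
  obtain ⟨r, ⟨⟨hr3, hr0 : 0 < r⟩, hr⟩⟩ := ((f3.and self_mem_nhdsWithin).and (Ioo_mem_nhdsGT (show (0:ℝ) < min (1/8) (min (ρ1 / 2) (ρ2/2)) by positivity))).exists
  have r1 : r < 1 / 8 := hr.2.trans_le (min_le_left _ _)
  have r2 : r < ρ1 / 2 := hr.2.trans_le ((min_le_right _ _).trans (min_le_left _ _))
  have r3 : r < ρ2 / 2 := hr.2.trans_le ((min_le_right _ _).trans (min_le_right _ _))
  have lowb : ENNReal.ofReal (1 - δ) * volume (SA r) ≤ ∫⁻ z in SA r, ENNReal.ofReal (-(fderiv ℝ u z z)) := by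
    rw [← setLIntegral_const]
    refine polar_cmp _ _ measurable_const (fmeas u).neg.ennreal_ofReal r hr0 ?_
    have hE : ∀ᵐ s : ℝ, s ∉ Ioo (0:ℝ) 1 \ E := measure_eq_zero_iff_ae_notMem.1 hEfull
    filter_upwards [hE] with s hs hsr
    have hsE : s ∈ E := by
      by_contra hc
      exact hs ⟨⟨hr0.trans hsr.1, by linarith [hsr.2]⟩, hc⟩
    refine flux_lower u s _ (F1 ⟨?_, hsE⟩)
    rw [mem_ball_zero_iff, Real.norm_eq_abs, abs_of_pos (hr0.trans hsr.1)]
    linarith [hsr.2]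
  have upb : ∫⁻ z in SA r, ENNReal.ofReal (-(fderiv ℝ u z z)) ≤ ENNReal.ofReal (m + δ) * volume (SA r) + ENNReal.ofReal (r ^ 2 * κ) := by
    calc ∫⁻ z in SA r, ENNReal.ofReal (-(fderiv ℝ u z z)) ≤ ∫⁻ z in SA r, (ENNReal.ofReal (m + δ) + gl ν z) := by
          refine lintegral_mono_ae ?_
          filter_upwards [ae_restrict_mem (SA_open r).measurableSet, ae_restrict_of_ae (ptwise u ν W hW hae)] with z hz hp
          have hz0 : 0 < ‖z‖ := hr0.trans hz.1
          refine (hp hz0 (by linarith [hz.2])).trans ?_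
          gcongr
          refine F2 ⟨?_, norm_pos_iff.1 hz0⟩
          rw [mem_ball_zero_iff]; linarith [hz.2]
      _ = ENNReal.ofReal (m + δ) * volume (SA r) + ∫⁻ z in SA r, gl ν z := by
          rw [lintegral_add_left measurable_const, setLIntegral_const]
      _ ≤ _ := by
          gcongr
          refine (lintegral_mono_set (SA_sub r)).trans ((gl_int ν hν r hr0).trans ?_)
          rw [ENNReal.ofReal_mul (by positivity)]
          gcongr
  have hfin : volume (SA r) ≠ ⊤ := ((measure_mono (SA_sub r)).trans_lt measure_ball_lt_top).ne
  have hV := SA_vol r hr0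
  have key := lowb.trans upb
  set V := (volume (SA r)).toReal with hVdef
  have hVe : volume (SA r) = ENNReal.ofReal V := (ENNReal.ofReal_toReal hfin).symm
  have hV0 : 0 ≤ V := ENNReal.toReal_nonneg
  rw [hVe] at hV key
  rw [ENNReal.ofReal_le_ofReal_iff hV0] at hV
  have hd1 : 0 ≤ 1 - δ := by rw [hδ]; linarith
  rw [← ENNReal.ofReal_mul hd1, ← ENNReal.ofReal_mul (by positivity), ← ENNReal.ofReal_add (by positivity) (by positivity),
    ENNReal.ofReal_le_ofReal_iff (by positivity)] at key
  have e : (1 - δ) = (m + δ) + 2 * δ := by rw [hδ]; ring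
  rw [e] at key
  have : 2 * δ * V ≤ r ^ 2 * κ := by linarith
  have h5 : 2 * δ * (π * (r / 2) ^ 2) ≤ 2 * δ * V := by gcongr
  have h6 : 2 * δ * (π * (r / 2) ^ 2) = 2 * (r ^ 2 * κ) := by rw [hκ]; ring
  have h7 : 0 < r ^ 2 * κ := by positivity
  linarith

lemma final_thm
    (u : ℂ → ℝ) (μ : SignedMeasure ℂ) (lam : ℝ) (E : Set ℝ)
    (hcurv : HasCurv u (ball (0 : ℂ) 1 \ {0}) μ)
    (harea : IntegrableOn (fun z => Real.exp (2 * u z)) (ball (0 : ℂ) 1) volume)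
    (hpos : ∀ A : Set ℂ, MeasurableSet A → A ⊆ ball (0 : ℂ) 1 \ {0} → 0 ≤ μ A)
    (hEfull : volume (Set.Ioo (0 : ℝ) 1 \ E) = 0)
    (hlam : Tendsto (flux u) (nhdsWithin 0 E) (𝓝 (2 * π * lam))) :
    -1 < lam := by
  obtain ⟨hu, htv0, hc⟩ := hcurv
  have hn := jordan_negPart_zero μ htv0 hpos
  set ν := μ.toJordanDecomposition.posPart with hνd
  have hνc : ν DSᶜ = 0 := by
    rw [SignedMeasure.totalVariation, Measure.add_apply] at htv0
    exact (add_eq_zero.1 htv0).1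
  have hν : ν (ball (0:ℂ) 1)ᶜ = 0 := measure_mono_null (compl_subset_compl.2 sdiff_subset) hνc
  have hν0 : ν {0} = 0 := measure_mono_null (by intro x hx hx2; exact hx2.2 hx) hνc
  have hc2 : ∀ φ : ℂ → ℝ, IsTestOn φ DS → (-∫ x in DS, u x * lap φ x) = ∫ y, φ y ∂ν := by
    intro φ hφ
    rw [hc φ hφ, sInt, hn]; simp [hνd]
  have Hw := weak_diff u hu ν hν hc2
  have hw : LocallyIntegrableOn (fun z => u z - pot ν z) DS := hu.sub (pot_loc ν hν)
  obtain ⟨A, hA, hQ⟩ := main_harm _ hw Hw (exp_int u hu ν hν harea Hw)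
  exact core u ν hν hν0 _ (fun z h1 h2 => WW_harm _ hw Hw z h1 h2) (WW_ae _ hw Hw) A hA hQ lam E hEfull hlam

/-- **Strict residue bound for nonnegative curvature (Lemma on residues, part 2).**
Let `g = e^{2u}g_euc ∈ 𝓜(D∖{0})` with `|𝕂_g|(D∖{0}) < π`, finite area
`∫_D e^{2u} < ∞`, and with the curvature measure `𝕂_g` nonnegative on `D∖{0}`.
Then `λ = lim_{a.e. r→0} (1/2π)∫_{∂D_r} ∂u/∂r` (which exists and satisfies `λ ≥ -1`)
satisfies the strict inequality `λ > -1`. -/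
theorem strict_residue_bound_of_nonneg_curvature
    (u : ℂ → ℝ) (μ : SignedMeasure ℂ) (lam : ℝ) (E : Set ℝ)
    (hcurv : HasCurv u (ball (0 : ℂ) 1 \ {0}) μ)
    (htv : μ.totalVariation (ball (0 : ℂ) 1 \ {0}) < ENNReal.ofReal π)
    (harea : IntegrableOn (fun z => Real.exp (2 * u z)) (ball (0 : ℂ) 1) volume)
    (hpos : ∀ A : Set ℂ, MeasurableSet A → A ⊆ ball (0 : ℂ) 1 \ {0} → 0 ≤ μ A)
    (hE : E ⊆ Set.Ioo 0 1) (hEfull : volume (Set.Ioo (0 : ℝ) 1 \ E) = 0)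
    (hlam : Tendsto (flux u) (nhdsWithin 0 E) (𝓝 (2 * π * lam))) :
    -1 < lam := by
  exact final_thm u μ lam E hcurv harea hpos hEfull hlam
end
end

section
/- Let v be a harmonic function on the flat cylinder S¹ × (a,b) (with b - a > 1) such that ‖∇v‖_{L¹(S¹×[t,t+1])} ≤ Λ for a.e. t ∈ (a, b-1). Then: (i) sup_{S¹×[a+1/2, b-1/2]} |∇v| ≤ 4Λ/π; (ii) the circle average (1/2π)∫_{S¹×{t}} v dθ is an affine function A + Bt of t with |B| ≤ 4Λ/π; and (iii) |v(t,θ) - A - Bt| ≤ 4Λ for all (θ,t) ∈ S¹ × [a+1/2, b-1/2]. -/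
open MeasureTheory Filter Topology Set Real

noncomputable section

/-- The flat Laplacian on `ℝ² = ℝ × ℝ` (coordinates `(θ, t)`). -/
noncomputable def lap2 (v : ℝ × ℝ → ℝ) (p : ℝ × ℝ) : ℝ :=
  fderiv ℝ (fun q => fderiv ℝ v q (1, 0)) p (1, 0) +
    fderiv ℝ (fun q => fderiv ℝ v q (0, 1)) p (0, 1)

/-- The Euclidean length of the gradient of `v : ℝ × ℝ → ℝ`. -/
noncomputable def gradNorm2 (v : ℝ × ℝ → ℝ) (p : ℝ × ℝ) : ℝ :=
  Real.sqrt ((fderiv ℝ v p (1, 0)) ^ 2 + (fderiv ℝ v p (0, 1)) ^ 2)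

lemma circle_le {F : ℂ → ℂ} {c : ℂ} {r : ℝ} (hr : 0 < r)
    (hF : DiffContOnCl ℂ F (Metric.ball c r)) :
    2 * π * ‖F c‖ ≤ ∫ φ in Ioo (-π) π, ‖F (circleMap c r φ)‖ := by
  have h1 : Real.circleAverage F c r = F c := by
    apply DiffContOnCl.circleAverage
    rwa [abs_of_pos hr]
  have h2 := Real.circleAverage_eq_integral_add (f := F) (c := c) (R := r) (-π)
  rw [h1, intervalIntegral.integral_comp_add_right (f := fun x => F (circleMap c r x))] at h2
  have e : 2 * π + -π = π := by ring
  rw [zero_add, e] at h2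
  have h3 : (∫ φ in Ioo (-π) π, ‖F (circleMap c r φ)‖) = ∫ φ in (-π)..π, ‖F (circleMap c r φ)‖ := by
    rw [intervalIntegral.integral_of_le (by linarith [pi_pos]), integral_Ioc_eq_integral_Ioo]
  rw [h3, h2, norm_smul, norm_inv, Real.norm_of_nonneg (by positivity), ← mul_assoc,
    mul_inv_cancel₀ (by positivity), one_mul]
  exact intervalIntegral.norm_integral_le_integral_norm (by linarith [pi_pos])

lemma disk_le {F : ℂ → ℂ} {c : ℂ} {R : ℝ} (hR : 0 < R)
    (hc : ContinuousOn F (Metric.closedBall c R))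
    (hd : DifferentiableOn ℂ F (Metric.ball c R)) :
    π * R ^ 2 * ‖F c‖ ≤ ∫ z in Metric.ball c R, ‖F z‖ := by
  have h1 : (∫ z in Metric.ball c R, ‖F z‖) =
      ∫ p in Ioo 0 R ×ˢ Ioo (-π) π, p.1 * ‖F (circleMap c p.1 p.2)‖ := by
    rw [← integral_indicator measurableSet_ball, ← integral_add_left_eq_self _ c,
      ← Complex.integral_comp_polarCoord_symm]
    have hsub : Ioo 0 R ×ˢ Ioo (-π) π ⊆ polarCoord.target := by
      rintro ⟨r, φ⟩ ⟨h, h'⟩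
      exact ⟨h.1, h'⟩
    rw [← inter_eq_self_of_subset_right hsub, ← setIntegral_indicator
      (measurableSet_Ioo.prod measurableSet_Ioo)]
    refine setIntegral_congr_fun polarCoord.open_target.measurableSet ?_
    rintro ⟨r, φ⟩ ⟨h, h'⟩
    have e : c + Complex.polarCoord.symm (r, φ) = circleMap c r φ := by
      rw [Complex.polarCoord_symm_apply, circleMap, Complex.exp_mul_I]
      push_cast
      rfl
    have h0 : (0:ℝ) < r := h
    simp only [e, indicator, smul_eq_mul]
    by_cases hr : r < R
    · rw [if_pos (by simp [abs_of_pos h0, hr]), if_pos ⟨⟨h0, hr⟩, h'⟩]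
    · rw [if_neg (by simpa [abs_of_pos h0] using hr), if_neg (fun hh => hr hh.1.2), mul_zero]
  have hcont : ContinuousOn (fun p : ℝ × ℝ => p.1 * ‖F (circleMap c p.1 p.2)‖)
      (Icc 0 R ×ˢ Icc (-π) π) := by
    refine continuousOn_fst.mul (ContinuousOn.norm (hc.comp ?_ ?_))
    · unfold circleMap; fun_prop
    · rintro ⟨r, φ⟩ ⟨h, h'⟩
      exact Metric.closedBall_subset_closedBall h.2 (circleMap_mem_closedBall c h.1 φ)
  have hintg : IntegrableOn (fun p : ℝ × ℝ => p.1 * ‖F (circleMap c p.1 p.2)‖)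
      (Ioo 0 R ×ˢ Ioo (-π) π) :=
    (hcont.integrableOn_compact (isCompact_Icc.prod isCompact_Icc)).mono_set
      (prod_mono Ioo_subset_Icc_self Ioo_subset_Icc_self)
  rw [h1, Measure.volume_eq_prod, setIntegral_prod _ hintg]
  have h2 : π * R ^ 2 * ‖F c‖ = ∫ r in Ioo 0 R, r * (2 * π * ‖F c‖) := by
    rw [← integral_Ioc_eq_integral_Ioo, ← intervalIntegral.integral_of_le hR.le,
      intervalIntegral.integral_mul_const, integral_id]
    ring
  rw [h2]
  refine setIntegral_mono_on ?_ ?_ measurableSet_Ioo ?_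
  · exact ((by fun_prop : Continuous fun r : ℝ => r * (2 * π * ‖F c‖)).integrableOn_Icc).mono_set
      Ioo_subset_Icc_self
  · have := hintg
    rw [IntegrableOn, Measure.volume_eq_prod, ← Measure.prod_restrict] at this
    exact this.integral_prod_left
  · intro r hr
    rw [integral_const_mul]
    refine mul_le_mul_of_nonneg_left (circle_le hr.1 ⟨hd.mono (Metric.ball_subset_ball hr.2.le), ?_⟩) hr.1.le
    rw [closure_ball _ hr.1.ne']
    exact hc.mono (Metric.closedBall_subset_closedBall hr.2.le)

/-- periodic shift -/
lemma per_int_s16 {g : ℝ × ℝ → ℝ} {a b s t : ℝ} (hg : ContinuousOn g (univ ×ˢ Ioo a b))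
    (hper : ∀ p : ℝ × ℝ, g (p.1 + 2 * π, p.2) = g p) (ht : a < t) (ht' : t + 1 < b) :
    (∫ p in Ico s (s + 2 * π) ×ˢ Icc t (t + 1), g p) =
      ∫ p in Ico 0 (2 * π) ×ˢ Icc t (t + 1), g p := by
  have key : ∀ s : ℝ, (∫ p in Ico s (s + 2 * π) ×ˢ Icc t (t + 1), g p) =
      ∫ y in Icc t (t + 1), ∫ x in s..(s + 2 * π), g (x, y) := by
    intro s
    have hintg : IntegrableOn g (Ico s (s + 2 * π) ×ˢ Icc t (t + 1)) :=
      ((hg.mono (prod_mono (subset_univ _) (Icc_subset_Ioo ht ht'))).integrableOn_compact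
        ((isCompact_Icc (a := s) (b := s + 2 * π)).prod isCompact_Icc)).mono_set
        (prod_mono Ico_subset_Icc_self le_rfl)
    rw [IntegrableOn, Measure.volume_eq_prod, ← Measure.prod_restrict] at hintg
    rw [Measure.volume_eq_prod, ← Measure.prod_restrict, integral_prod_symm _ hintg]
    refine integral_congr_ae (Eventually.of_forall fun y => ?_)
    simp only
    rw [intervalIntegral.integral_of_le (by linarith [pi_pos]), integral_Ico_eq_integral_Ioc]
  have k0 := key 0
  rw [zero_add] at k0
  rw [key, k0]
  refine integral_congr_ae (Eventually.of_forall fun y => ?_)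
  have hp : Function.Periodic (fun x => g (x, y)) (2 * π) := fun x => hper (x, y)
  simpa using hp.intervalIntegral_add_eq s 0

/-- differentiate under the integral -/
lemma deriv_int {g : ℝ × ℝ → ℝ} {a b t : ℝ} (hg : ContDiffOn ℝ (⊤ : ℕ∞) g (univ ×ˢ Ioo a b))
    (ht : t ∈ Ioo a b) (c d : ℝ) :
    HasDerivAt (fun t => ∫ θ in c..d, g (θ, t)) (∫ θ in c..d, fderiv ℝ g (θ, t) (0, 1)) t := by
  have hop : IsOpen (univ ×ˢ Ioo a b : Set (ℝ × ℝ)) := isOpen_univ.prod isOpen_Ioo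
  have hc' : ContinuousOn (fun p => fderiv ℝ g p (0, 1)) (univ ×ˢ Ioo a b) :=
    (hg.continuousOn_fderiv_of_isOpen hop (by simp)).clm_apply continuousOn_const
  have hslice : ∀ {h : ℝ × ℝ → ℝ} (_ : ContinuousOn h (univ ×ˢ Ioo a b)) (s : ℝ) (_ : s ∈ Ioo a b),
      Continuous (fun θ => h (θ, s)) := by
    intro h hh s hs
    rw [← continuousOn_univ]
    exact hh.comp (by fun_prop) (fun x _ => ⟨mem_univ _, hs⟩)
  obtain ⟨ε, hε, hsub⟩ := Metric.nhds_basis_closedBall.mem_iff.1 (Ioo_mem_nhds ht.1 ht.2)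
  obtain ⟨C, hC⟩ := ((isCompact_uIcc (a := c) (b := d)).prod
    (isCompact_closedBall t ε)).exists_bound_of_continuousOn
    (hc'.mono (prod_mono (subset_univ _) hsub))
  refine (intervalIntegral.hasDerivAt_integral_of_dominated_loc_of_deriv_le
    (F := fun t θ => g (θ, t)) (F' := fun t θ => fderiv ℝ g (θ, t) (0, 1)) (bound := fun _ => C)
    (Metric.closedBall_mem_nhds t hε) ?_ ?_ ?_ ?_ ?_ ?_).2
  · filter_upwards [Ioo_mem_nhds ht.1 ht.2] with s hs
    exact (hslice hg.continuousOn s hs).aestronglyMeasurable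
  · exact (hslice hg.continuousOn t ht).intervalIntegrable _ _
  · exact (hslice hc' t ht).aestronglyMeasurable
  · refine Eventually.of_forall fun θ hθ s hs => hC (θ, s) ⟨uIoc_subset_uIcc hθ, hs⟩
  · exact intervalIntegrable_const
  · refine Eventually.of_forall fun θ hθ s hs => ?_
    have h1 : HasFDerivAt g (fderiv ℝ g (θ, s)) (θ, s) :=
      ((hg.contDiffAt (hop.mem_nhds ⟨mem_univ _, hsub hs⟩)).differentiableAt (by simp)).hasFDerivAt
    have h2 : HasDerivAt (fun s : ℝ => (θ, s)) ((0:ℝ), (1:ℝ)) s :=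
      (hasDerivAt_const s θ).prodMk (hasDerivAt_id s)
    exact h1.comp_hasDerivAt s h2

lemma gradNorm2_continuousOn {v : ℝ × ℝ → ℝ} {a b : ℝ}
    (hsm : ContDiffOn ℝ (⊤ : ℕ∞) v (univ ×ˢ Ioo a b)) :
    ContinuousOn (gradNorm2 v) (univ ×ˢ Ioo a b) := by
  have hop : IsOpen (univ ×ˢ Ioo a b : Set (ℝ × ℝ)) := isOpen_univ.prod isOpen_Ioo
  have hc := hsm.continuousOn_fderiv_of_isOpen hop (by simp)
  unfold gradNorm2
  exact (((hc.clm_apply continuousOn_const).pow 2).add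
    ((hc.clm_apply continuousOn_const).pow 2)).sqrt

lemma contDiffOn_partial {v : ℝ × ℝ → ℝ} {a b : ℝ}
    (hsm : ContDiffOn ℝ (⊤ : ℕ∞) v (univ ×ˢ Ioo a b)) (w : ℝ × ℝ) :
    ContDiffOn ℝ (⊤ : ℕ∞) (fun p => fderiv ℝ v p w) (univ ×ˢ Ioo a b) := by
  have hop : IsOpen (univ ×ˢ Ioo a b : Set (ℝ × ℝ)) := isOpen_univ.prod isOpen_Ioo
  exact (hsm.fderiv_of_isOpen (m := (⊤ : ℕ∞)) hop (by simp)).clm_apply contDiffOn_const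

lemma fderiv_per {v : ℝ × ℝ → ℝ} (hper : ∀ p : ℝ × ℝ, v (p.1 + 2 * π, p.2) = v p)
    (p : ℝ × ℝ) : fderiv ℝ v (p.1 + 2 * π, p.2) = fderiv ℝ v p := by
  have h1 : (fun q : ℝ × ℝ => v (q + (2 * π, 0))) = v := by
    funext q
    rw [← hper q]
    congr 1
    ext <;> simp
  have h2 := fderiv_comp_add_right (𝕜 := ℝ) (f := v) (x := p) (2 * π, 0)
  rw [h1] at h2
  rw [h2]
  congr 1
  ext <;> simp

/-- complex gradient -/
def cgrad (v : ℝ × ℝ → ℝ) (z : ℂ) : ℂ :=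
  (fderiv ℝ v (z.re, z.im) (1, 0) : ℂ) - Complex.I * (fderiv ℝ v (z.re, z.im) (0, 1) : ℂ)

lemma norm_cgrad (v : ℝ × ℝ → ℝ) (z : ℂ) : ‖cgrad v z‖ = gradNorm2 v (z.re, z.im) := by
  rw [Complex.norm_def, Complex.normSq_apply, gradNorm2]
  simp [cgrad, sq]

lemma cgrad_diff {v : ℝ × ℝ → ℝ} {a b : ℝ}
    (hsm : ContDiffOn ℝ (⊤ : ℕ∞) v (univ ×ˢ Ioo a b))
    (hharm : ∀ p ∈ (univ ×ˢ Ioo a b : Set (ℝ × ℝ)), lap2 v p = 0) {z : ℂ} (hz : z.im ∈ Ioo a b) :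
    DifferentiableAt ℂ (cgrad v) z := by
  have hop : IsOpen (univ ×ˢ Ioo a b : Set (ℝ × ℝ)) := isOpen_univ.prod isOpen_Ioo
  have hmem : (z.re, z.im) ∈ (univ ×ˢ Ioo a b : Set (ℝ × ℝ)) := ⟨mem_univ _, hz⟩
  have hd : ∀ w, HasFDerivAt (fun p => fderiv ℝ v p w)
      (fderiv ℝ (fun p => fderiv ℝ v p w) (z.re, z.im)) (z.re, z.im) := fun w =>
    (((contDiffOn_partial hsm w).contDiffAt (hop.mem_nhds hmem)).differentiableAt
      (by simp)).hasFDerivAt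
  have hp : HasFDerivAt (fun z : ℂ => (z.re, z.im)) (Complex.reCLM.prod Complex.imCLM) z :=
    (Complex.reCLM.hasFDerivAt).prodMk (Complex.imCLM.hasFDerivAt)
  have hcomp : ∀ w, HasFDerivAt (fun z : ℂ => ((fderiv ℝ v (z.re, z.im) w : ℝ) : ℂ))
      (Complex.ofRealCLM.comp ((fderiv ℝ (fun p => fderiv ℝ v p w) (z.re, z.im)).comp
        (Complex.reCLM.prod Complex.imCLM))) z := fun w =>
    Complex.ofRealCLM.hasFDerivAt.comp z (HasFDerivAt.comp (g := fun p => fderiv ℝ v p w) z (hd w) hp)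
  have hF := (hcomp (1, 0)).sub ((hcomp (0, 1)).const_mul Complex.I)
  rw [differentiableAt_complex_iff_differentiableAt_real]
  refine ⟨hF.differentiableAt, ?_⟩
  have hF' : fderiv ℝ (cgrad v) z = _ := hF.fderiv
  have hsymm : fderiv ℝ (fun p => fderiv ℝ v p (1, 0)) (z.re, z.im) (0, 1) =
      fderiv ℝ (fun p => fderiv ℝ v p (0, 1)) (z.re, z.im) (1, 0) := by
    have hv := hsm.contDiffAt (hop.mem_nhds hmem)
    have hdd : DifferentiableAt ℝ (fderiv ℝ v) (z.re, z.im) :=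
      (hv.fderiv_right (m := 1) (by norm_cast)).differentiableAt (by simp)
    rw [fderiv_clm_apply hdd (by fun_prop), fderiv_clm_apply hdd (by fun_prop)]
    simp
    exact hv.isSymmSndFDerivAt (by simp; exact WithTop.coe_le_coe.2 le_top) _ _
  have hl := hharm _ hmem
  unfold lap2 at hl
  rw [hF']
  apply Complex.ext
  · simp [hsymm]
  · simp
    linarith

lemma grad_bound_r {a b Λ : ℝ} {v : ℝ × ℝ → ℝ} (hab : 1 < b - a)
    (hper : ∀ p : ℝ × ℝ, v (p.1 + 2 * π, p.2) = v p)
    (hsm : ContDiffOn ℝ (⊤ : ℕ∞) v (univ ×ˢ Ioo a b))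
    (hharm : ∀ p ∈ (univ ×ˢ Ioo a b : Set (ℝ × ℝ)), lap2 v p = 0)
    (hgrad : ∀ᵐ t ∂(volume.restrict (Ioo a (b - 1))),
      (∫ p in (Ico (0 : ℝ) (2 * π)) ×ˢ Icc t (t + 1), gradNorm2 v p) ≤ Λ)
    {p : ℝ × ℝ} (hp : p.2 ∈ Icc (a + 1 / 2) (b - 1 / 2)) {r : ℝ} (hr : 0 < r) (hr' : r < 1 / 2) :
    π * r ^ 2 * gradNorm2 v p ≤ Λ := by
  obtain ⟨hp1, hp2⟩ := hp
  -- choose a good `t`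
  obtain ⟨t, ⟨hta, htb⟩, ht1, ht2, htΛ⟩ : ∃ t, t ∈ Ioo a (b - 1) ∧ p.2 + r - 1 < t ∧ t < p.2 - r ∧
      (∫ p in (Ico (0 : ℝ) (2 * π)) ×ˢ Icc t (t + 1), gradNorm2 v p) ≤ Λ := by
    rw [ae_restrict_iff' measurableSet_Ioo] at hgrad
    have hlt : max a (p.2 + r - 1) < min (b - 1) (p.2 - r) := by
      apply max_lt <;> apply lt_min <;> linarith
    obtain ⟨t, ht, ht'⟩ := (Measure.dense_of_ae hgrad).exists_between hlt
    rw [mem_Ioo, max_lt_iff, lt_min_iff] at ht'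
    exact ⟨t, ⟨ht'.1.1, ht'.2.1⟩, ht'.1.2, ht'.2.2, ht ⟨ht'.1.1, ht'.2.1⟩⟩
  set c : ℂ := ⟨p.1, p.2⟩ with hc
  have him : ∀ z ∈ Metric.closedBall c r, |z.re - p.1| ≤ r ∧ |z.im - p.2| ≤ r := by
    intro z hz
    rw [Metric.mem_closedBall, dist_eq_norm] at hz
    have h1 := Complex.abs_re_le_norm (z - c)
    have h2 := Complex.abs_im_le_norm (z - c)
    simp only [Complex.sub_re, Complex.sub_im, hc] at h1 h2
    exact ⟨h1.trans hz, h2.trans hz⟩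
  have hdiff : ∀ z ∈ Metric.closedBall c r, DifferentiableAt ℂ (cgrad v) z := by
    intro z hz
    have := abs_le.1 (him z hz).2
    exact cgrad_diff hsm hharm ⟨by linarith, by linarith⟩
  have h1 := disk_le hr (fun z hz => (hdiff z hz).continuousAt.continuousWithinAt)
    (fun z hz => (hdiff z (Metric.ball_subset_closedBall hz)).differentiableWithinAt)
  rw [norm_cgrad] at h1
  simp_rw [norm_cgrad] at h1
  refine h1.trans (le_trans ?_ htΛ)
  have hgc := gradNorm2_continuousOn hsm
  have hgp : ∀ p : ℝ × ℝ, gradNorm2 v (p.1 + 2 * π, p.2) = gradNorm2 v p := by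
    intro p
    unfold gradNorm2
    rw [fderiv_per hper]
  rw [← per_int_s16 (s := p.1 - π) hgc hgp hta (by linarith)]
  have htr := (Complex.volume_preserving_equiv_real_prod).setIntegral_preimage_emb
    Complex.measurableEquivRealProd.measurableEmbedding (gradNorm2 v)
    (Ico (p.1 - π) (p.1 - π + 2 * π) ×ˢ Icc t (t + 1))
  have hintg := (Complex.volume_preserving_equiv_real_prod).integrableOn_comp_preimage
    Complex.measurableEquivRealProd.measurableEmbedding (f := gradNorm2 v)
    (s := Ico (p.1 - π) (p.1 - π + 2 * π) ×ˢ Icc t (t + 1))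
  rw [← htr]
  refine setIntegral_mono_set (hintg.2 ?_) (Eventually.of_forall fun z => Real.sqrt_nonneg _)
    (LE.le.eventuallyLE ?_)
  · exact ((hgc.mono (prod_mono (subset_univ _) (Icc_subset_Ioo hta (by linarith)))
      ).integrableOn_compact ((isCompact_Icc (a := p.1 - π)
        (b := p.1 - π + 2 * π)).prod isCompact_Icc)).mono_set (prod_mono Ico_subset_Icc_self le_rfl)
  · intro z hz
    obtain ⟨h1, h2⟩ := him z (Metric.ball_subset_closedBall hz)
    rw [abs_le] at h1 h2
    have := pi_gt_three
    refine ⟨⟨?_, ?_⟩, ⟨?_, ?_⟩⟩ <;> simp <;> linarith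

lemma grad_bound {a b Λ : ℝ} {v : ℝ × ℝ → ℝ} (hab : 1 < b - a)
    (hper : ∀ p : ℝ × ℝ, v (p.1 + 2 * π, p.2) = v p)
    (hsm : ContDiffOn ℝ (⊤ : ℕ∞) v (univ ×ˢ Ioo a b))
    (hharm : ∀ p ∈ (univ ×ˢ Ioo a b : Set (ℝ × ℝ)), lap2 v p = 0)
    (hgrad : ∀ᵐ t ∂(volume.restrict (Ioo a (b - 1))),
      (∫ p in (Ico (0 : ℝ) (2 * π)) ×ˢ Icc t (t + 1), gradNorm2 v p) ≤ Λ)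
    {p : ℝ × ℝ} (hp : p.2 ∈ Icc (a + 1 / 2) (b - 1 / 2)) :
    gradNorm2 v p ≤ 4 * Λ / π := by
  have h1 : Tendsto (fun r : ℝ => π * r ^ 2 * gradNorm2 v p) (𝓝[<] (1 / 2))
      (𝓝 (π * (1 / 2) ^ 2 * gradNorm2 v p)) :=
    ((by fun_prop : Continuous fun r : ℝ => π * r ^ 2 * gradNorm2 v p).tendsto _).mono_left
      nhdsWithin_le_nhds
  have h2 : π * (1 / 2) ^ 2 * gradNorm2 v p ≤ Λ := by
    refine le_of_tendsto h1 ?_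
    filter_upwards [Ioo_mem_nhdsLT (show (0:ℝ) < 1 / 2 by norm_num)] with r hr
    exact grad_bound_r hab hper hsm hharm hgrad hp hr.1 hr.2
  rw [le_div_iff₀ pi_pos]
  linarith

lemma avg_affine {a b : ℝ} {v : ℝ × ℝ → ℝ} (hab : a < b)
    (hper : ∀ p : ℝ × ℝ, v (p.1 + 2 * π, p.2) = v p)
    (hsm : ContDiffOn ℝ (⊤ : ℕ∞) v (univ ×ˢ Ioo a b))
    (hharm : ∀ p ∈ (univ ×ˢ Ioo a b : Set (ℝ × ℝ)), lap2 v p = 0) {t₀ : ℝ} (ht₀ : t₀ ∈ Ioo a b) :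
    ∃ A, ∀ t ∈ Ioo a b, (∫ θ in (0 : ℝ)..(2 * π), v (θ, t)) =
      A + (∫ θ in (0 : ℝ)..(2 * π), fderiv ℝ v (θ, t₀) (0, 1)) * t := by
  have hop : IsOpen (univ ×ˢ Ioo a b : Set (ℝ × ℝ)) := isOpen_univ.prod isOpen_Ioo
  have hvt := contDiffOn_partial hsm (0, 1)
  have hvx := contDiffOn_partial hsm (1, 0)
  have hzero : ∀ t ∈ Ioo a b,
      (∫ θ in (0 : ℝ)..(2 * π), fderiv ℝ (fun q => fderiv ℝ v q (0, 1)) (θ, t) (0, 1)) = 0 := by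
    intro t ht
    have h1 : (∫ θ in (0 : ℝ)..(2 * π), fderiv ℝ (fun q => fderiv ℝ v q (1, 0)) (θ, t) (1, 0)) =
        fderiv ℝ v (2 * π, t) (1, 0) - fderiv ℝ v (0, t) (1, 0) := by
      refine intervalIntegral.integral_eq_sub_of_hasDerivAt
        (f := fun θ => fderiv ℝ v (θ, t) (1, 0)) (fun θ _ => ?_) ?_
      · have h1 := ((hvx.contDiffAt (hop.mem_nhds (x := (θ, t))
          ⟨mem_univ _, ht⟩)).differentiableAt (by simp)).hasFDerivAt
        have h2 : HasDerivAt (fun s : ℝ => (s, t)) ((1:ℝ), (0:ℝ)) θ :=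
          (hasDerivAt_id θ).prodMk (hasDerivAt_const θ t)
        exact h1.comp_hasDerivAt θ h2
      · apply Continuous.intervalIntegrable
        rw [← continuousOn_univ]
        exact (contDiffOn_partial hvx (1, 0)).continuousOn.comp
          (f := fun θ : ℝ => (θ, t)) (by fun_prop) (fun x _ => ⟨mem_univ _, ht⟩)
    have h2 := fderiv_per hper (0, t)
    simp only [zero_add] at h2
    rw [h2, sub_self] at h1
    rw [← neg_eq_zero]
    refine Eq.trans ?_ h1
    rw [← intervalIntegral.integral_neg]
    refine intervalIntegral.integral_congr fun θ _ => ?_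
    have := hharm (θ, t) ⟨mem_univ _, ht⟩
    unfold lap2 at this
    linarith
  have hB : ∀ t ∈ Ioo a b, (∫ θ in (0 : ℝ)..(2 * π), fderiv ℝ v (θ, t) (0, 1)) =
      ∫ θ in (0 : ℝ)..(2 * π), fderiv ℝ v (θ, t₀) (0, 1) := by
    intro t ht
    refine isOpen_Ioo.is_const_of_deriv_eq_zero (𝕜 := ℝ) isPreconnected_Ioo
      (f := fun t => ∫ θ in (0 : ℝ)..(2 * π), fderiv ℝ v (θ, t) (0, 1)) ?_ ?_ ht ht₀
    · exact fun s hs => (deriv_int hvt hs _ _).differentiableAt.differentiableWithinAt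
    · intro s hs
      rw [(deriv_int hvt hs _ _).deriv, hzero s hs]
      rfl
  set B := ∫ θ in (0 : ℝ)..(2 * π), fderiv ℝ v (θ, t₀) (0, 1) with hBdef
  refine ⟨(∫ θ in (0 : ℝ)..(2 * π), v (θ, t₀)) - B * t₀, fun t ht => ?_⟩
  have hd : ∀ s ∈ Ioo a b, HasDerivAt
      (fun t => (∫ θ in (0 : ℝ)..(2 * π), v (θ, t)) - B * t) 0 s := by
    intro s hs
    have h1 := (deriv_int hsm hs 0 (2 * π)).sub ((hasDerivAt_id s).const_mul B)
    rw [hB s hs] at h1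
    rw [mul_one, sub_self] at h1
    exact h1
  have := isOpen_Ioo.is_const_of_deriv_eq_zero isPreconnected_Ioo
      (f := fun t => (∫ θ in (0 : ℝ)..(2 * π), v (θ, t)) - B * t)
      (fun s hs => (hd s hs).differentiableAt.differentiableWithinAt)
      (fun s hs => (hd s hs).deriv) ht ht₀
  linarith

lemma abs_avg_le {f : ℝ → ℝ} {K s : ℝ} (h : ∀ x ∈ uIoc s (s + 2 * π), ‖f x‖ ≤ K) :
    |1 / (2 * π) * ∫ θ in s..(s + 2 * π), f θ| ≤ K := by
  have h1 := intervalIntegral.norm_integral_le_of_norm_le_const h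
  rw [add_sub_cancel_left, abs_of_pos two_pi_pos, Real.norm_eq_abs] at h1
  rw [abs_mul, abs_of_pos (by positivity), one_div, ← div_eq_inv_mul, div_le_iff₀ two_pi_pos]
  exact h1

/-- **Interior estimates for harmonic functions on a flat cylinder.**
Let `v` be a harmonic function on the flat cylinder `S¹ × (a,b)` (`b - a > 1`),
realized as a function `v(θ,t)` on the strip `ℝ × (a,b)` that is `2π`-periodic in `θ`,
with `‖∇v‖_{L¹(S¹×[t,t+1])} ≤ Λ` for a.e. `t ∈ (a, b-1)`.  Then:
(i) `sup_{S¹×[a+1/2,b-1/2]} |∇v| ≤ 4Λ/π`;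
(ii) the circle average `(1/2π)∫_{S¹×{t}} v dθ` is an affine function `A + Bt` of `t`
with `|B| ≤ 4Λ/π`; and
(iii) `|v(θ,t) - A - Bt| ≤ 4Λ` on `S¹ × [a+1/2, b-1/2]`. -/
theorem harmonic_cylinder_estimates
    (a b Λ : ℝ) (hab : 1 < b - a) (hΛ : 0 < Λ)
    (v : ℝ × ℝ → ℝ)
    (hper : ∀ p : ℝ × ℝ, v (p.1 + 2 * π, p.2) = v p)
    (hsm : ContDiffOn ℝ (⊤ : ℕ∞) v (Set.univ ×ˢ Set.Ioo a b))
    (hharm : ∀ p ∈ (Set.univ ×ˢ Set.Ioo a b : Set (ℝ × ℝ)), lap2 v p = 0)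
    (hgrad : ∀ᵐ t ∂(volume.restrict (Set.Ioo a (b - 1))),
      (∫ p in (Set.Ico (0 : ℝ) (2 * π)) ×ˢ Set.Icc t (t + 1), gradNorm2 v p) ≤ Λ) :
    ∃ A B : ℝ, |B| ≤ 4 * Λ / π ∧
      (∀ t ∈ Set.Ioo a b,
        (1 / (2 * π)) * ∫ θ in (0 : ℝ)..(2 * π), v (θ, t) = A + B * t) ∧
      (∀ p : ℝ × ℝ, p.2 ∈ Set.Icc (a + 1 / 2) (b - 1 / 2) →
        gradNorm2 v p ≤ 4 * Λ / π ∧ |v p - A - B * p.2| ≤ 4 * Λ) := by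
  have hmid : (a + b) / 2 ∈ Icc (a + 1 / 2) (b - 1 / 2) := ⟨by linarith, by linarith⟩
  have hmid' : (a + b) / 2 ∈ Ioo a b := ⟨by linarith, by linarith⟩
  have hG : ∀ p : ℝ × ℝ, p.2 ∈ Icc (a + 1 / 2) (b - 1 / 2) → gradNorm2 v p ≤ 4 * Λ / π :=
    fun p hp => grad_bound hab hper hsm hharm hgrad hp
  have hop : IsOpen (univ ×ˢ Ioo a b : Set (ℝ × ℝ)) := isOpen_univ.prod isOpen_Ioo
  obtain ⟨A, hA⟩ := avg_affine (by linarith) hper hsm hharm hmid'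
  set B := ∫ θ in (0 : ℝ)..(2 * π), fderiv ℝ v (θ, (a + b) / 2) (0, 1) with hB
  have hav : ∀ t ∈ Ioo a b, (1 / (2 * π)) * ∫ θ in (0 : ℝ)..(2 * π), v (θ, t) =
      1 / (2 * π) * A + 1 / (2 * π) * B * t := by
    intro t ht
    rw [hA t ht]
    ring
  refine ⟨1 / (2 * π) * A, 1 / (2 * π) * B, ?_, hav, fun p hp => ⟨hG p hp, ?_⟩⟩
  · have := abs_avg_le (f := fun θ => fderiv ℝ v (θ, (a + b) / 2) (0, 1)) (K := 4 * Λ / π) (s := 0)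
      (fun x _ => (Real.abs_le_sqrt (by nlinarith [sq_nonneg (fderiv ℝ v (x, (a + b) / 2) (1, 0))]
        )).trans (hG (x, (a + b) / 2) hmid))
    rwa [zero_add] at this
  · obtain ⟨x, t⟩ := p
    have ht : t ∈ Ioo a b := ⟨by linarith [hp.1], by linarith [hp.2]⟩
    have hdv : ∀ θ, HasDerivAt (fun θ => v (θ, t)) (fderiv ℝ v (θ, t) (1, 0)) θ := by
      intro θ
      have h1 := ((hsm.contDiffAt (hop.mem_nhds (x := (θ, t))
        ⟨mem_univ _, ht⟩)).differentiableAt (by simp)).hasFDerivAt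
      have h2 : HasDerivAt (fun s : ℝ => (s, t)) ((1:ℝ), (0:ℝ)) θ :=
        (hasDerivAt_id θ).prodMk (hasDerivAt_const θ t)
      exact h1.comp_hasDerivAt θ h2
    have hlip : ∀ y, ‖v (x, t) - v (y, t)‖ ≤ 4 * Λ / π * ‖x - y‖ := by
      intro y
      refine convex_univ.norm_image_sub_le_of_norm_hasDerivWithin_le (f := fun θ => v (θ, t))
        (fun θ _ => (hdv θ).hasDerivWithinAt) (fun θ _ => ?_) (mem_univ y) (mem_univ x)
      exact (Real.abs_le_sqrt (by nlinarith [sq_nonneg (fderiv ℝ v (θ, t) (0, 1))])).trans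
        (hG (θ, t) hp)
    have h3 := abs_avg_le (f := fun θ => v (x, t) - v (θ, t)) (K := 4 * Λ) (s := x - π) (by
      intro y hy
      rw [uIoc_of_le (by linarith [pi_pos])] at hy
      refine (hlip y).trans ?_
      have : ‖x - y‖ ≤ π := by
        rw [Real.norm_eq_abs, abs_le]
        constructor <;> linarith [hy.1, hy.2]
      calc 4 * Λ / π * ‖x - y‖ ≤ 4 * Λ / π * π := by gcongr
        _ = 4 * Λ := by field_simp)
    have hcont : Continuous (fun θ => v (θ, t)) :=
      continuous_iff_continuousAt.2 fun θ => (hdv θ).continuousAt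
    rw [intervalIntegral.integral_sub (by simp) (hcont.intervalIntegrable _ _),
      intervalIntegral.integral_const, mul_sub, add_sub_cancel_left, smul_eq_mul] at h3
    have hp' : Function.Periodic (fun θ => v (θ, t)) (2 * π) := fun θ => hper (θ, t)
    have h4 := hp'.intervalIntegral_add_eq (x - π) 0
    rw [zero_add] at h4
    rw [h4, hav t ht, ← mul_assoc, one_div, inv_mul_cancel₀ two_pi_pos.ne', one_mul,
      ← sub_sub] at h3
    simpa using h3
end
end
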